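/- arXiv:math/0410438 — 3 statements merged into one kernel-verified Lean document; each statement's English description precedes it below -/
import Mathlib

section
/- Let α be an N×N complex matrix whose spectrum lies in the open upper half plane, and let Λ be an N×k complex matrix. Then the unique Hermitian solution Σ of the Lyapunov-type identity αΣ − Σα* = iΛΛ* is given by Σ = (1/2π) ∫_{−∞}^{∞} (α − λI_N)⁻¹ ΛΛ* (α* − λI_N)⁻¹ dλ, and this Σ is positive semidefinite; it is positive definite if the pair {α, Λ} is full range. -/
open Matrix MeasureTheory
open scoped ComplexOrder

open Filter Topology Bornology Asymptotics Complex in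
/-- Cauchy's theorem for the lower half plane. -/
theorem integral_ofReal_eq_zero_of_differentiableOn_of_isBigO {E : Type*} [NormedAddCommGroup E]
    [NormedSpace ℂ E] {f : ℂ → E} (hf : DifferentiableOn ℂ f {z | z.im ≤ 0})
    (hO : f =O[cobounded ℂ] fun z => (z ^ 2)⁻¹) (hint : Integrable fun t : ℝ => f t) :
    ∫ t : ℝ, f t = 0 := by
  obtain ⟨C, hC0, hC⟩ := hO.exists_pos
  rw [IsBigOWith, ← comap_norm_atTop, (atTop_basis.comap norm).eventually_iff] at hC
  obtain ⟨r, -, hr⟩ := hC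
  have hbound : ∀ T : ℝ, 0 < T → r ≤ T → ∀ z : ℂ, T ≤ ‖z‖ → ‖f z‖ ≤ C * (T ^ 2)⁻¹ := by
    intro T hT hrT z hz
    refine (hr (hrT.trans hz)).trans ?_
    rw [norm_inv, norm_pow]
    gcongr
  have hsmall : ∀ T : ℝ, 0 < T → r ≤ T → ‖∫ t in (-T)..T, f t‖ ≤ 4 * C * T⁻¹ := by
    intro T hT hrT
    have key := integral_boundary_rect_eq_zero_of_differentiableOn f ⟨-T, -T⟩ ⟨T, 0⟩ (hf.mono ?_)
    · simp only [ofReal_zero, zero_mul, add_zero] at key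
      have h1 : ‖∫ x : ℝ in (-T)..T, f (x + (-T : ℝ) * I)‖ ≤ C * (T ^ 2)⁻¹ * |T - -T| := by
        refine intervalIntegral.norm_integral_le_of_norm_le_const fun x _ => hbound T hT hrT _ ?_
        simpa [abs_of_pos hT] using abs_im_le_norm ((x : ℂ) + (-T : ℝ) * I)
      have h2 : ‖∫ y : ℝ in (-T)..0, f ((T : ℝ) + y * I)‖ ≤ C * (T ^ 2)⁻¹ * |0 - -T| := by
        refine intervalIntegral.norm_integral_le_of_norm_le_const fun x _ => hbound T hT hrT _ ?_
        simpa [abs_of_pos hT] using abs_re_le_norm ((T : ℂ) + x * I)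
      have h3 : ‖∫ y : ℝ in (-T)..0, f ((-T : ℝ) + y * I)‖ ≤ C * (T ^ 2)⁻¹ * |0 - -T| := by
        refine intervalIntegral.norm_integral_le_of_norm_le_const fun x _ => hbound T hT hrT _ ?_
        simpa [abs_of_pos hT] using abs_re_le_norm (((-T : ℝ) : ℂ) + x * I)
      have h4 : ∫ t in (-T)..T, f t = (∫ x : ℝ in (-T)..T, f (x + (-T : ℝ) * I))
          + I • (∫ y : ℝ in (-T)..0, f ((T : ℝ) + y * I))
          - I • ∫ y : ℝ in (-T)..0, f ((-T : ℝ) + y * I) := by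
        rw [← sub_eq_zero, ← neg_eq_zero, ← key]
        abel
      rw [h4]
      have hI (v : E) : ‖I • v‖ = ‖v‖ := by rw [norm_smul, norm_I, one_mul]
      refine (norm_sub_le_of_le (norm_add_le_of_le h1 ((hI _).trans_le h2))
        ((hI _).trans_le h3)).trans_eq ?_
      rw [sub_neg_eq_add, sub_neg_eq_add, zero_add, abs_of_pos hT, abs_of_pos (by positivity)]
      field_simp
      ring
    · intro z hz
      have := hz.2
      simp only [Set.mem_preimage, Set.uIcc_of_le (neg_nonpos.2 hT.le), Set.mem_Icc] at this
      exact this.2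
  refine tendsto_nhds_unique
    (intervalIntegral_tendsto_integral hint tendsto_neg_atTop_atBot tendsto_id) ?_
  refine squeeze_zero_norm' ?_ (by simpa using tendsto_inv_atTop_zero.const_mul (4 * C))
  filter_upwards [eventually_gt_atTop 0, eventually_ge_atTop r] with T hT hrT
  exact hsmall T hT hrT

open Filter Bornology Asymptotics in
theorem integrable_of_continuous_of_isBigO_inv_sq {E : Type*} [NormedAddCommGroup E] {f : ℝ → E}
    (hf : Continuous f) (hO : f =O[cobounded ℝ] fun t => (t ^ 2)⁻¹) : Integrable f := by
  refine hf.locallyIntegrable.integrable_of_isBigO_cocompact (g := fun t : ℝ => (1 + t ^ 2)⁻¹) ?_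
    (integrable_inv_one_add_sq.integrableAtFilter _)
  rw [← Metric.cobounded_eq_cocompact]
  refine hO.trans (IsBigO.of_bound 2 ?_)
  filter_upwards [eventually_cobounded_le_norm (1 : ℝ)] with t ht
  have h1 : 1 ≤ t ^ 2 := by
    rw [← sq_abs]
    exact one_le_pow₀ ht
  rw [norm_inv, norm_inv, Real.norm_of_nonneg (by positivity), Real.norm_of_nonneg (by positivity),
    ← div_eq_mul_inv, inv_le_comm₀ (by positivity) (by positivity), inv_div,
    div_le_iff₀ (by positivity)]
  linarith

section Algebra

variable {A : Type*} [Ring A] [Algebra ℂ A] {a : A}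

theorem mem_resolventSet_of_im_nonpos (ha : ∀ μ ∈ spectrum ℂ a, 0 < μ.im) {z : ℂ}
    (hz : z.im ≤ 0) : z ∈ resolventSet ℂ a := by
  by_contra h
  exact (ha z h).not_ge hz

theorem resolvent_mul_sub {z : ℂ} (hz : z ∈ resolventSet ℂ a) :
    resolvent a z * (algebraMap ℂ A z - a) = 1 :=
  Ring.inverse_mul_cancel _ hz

end Algebra

section BanachAlgebra

variable {A : Type*} [NormedRing A] [NormedAlgebra ℂ A] {a : A}

open Filter Bornology Asymptotics

theorem sub_I_ne_zero_of_im_nonpos {z : ℂ} (hz : z.im ≤ 0) : z - Complex.I ≠ 0 := fun h => by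
  rw [sub_eq_zero.1 h, Complex.I_im] at hz
  linarith

/-- The resolvent minus its leading part, chosen to be regular in the closed lower half plane. -/
noncomputable def resolventRemainder (a : A) (z : ℂ) : A :=
  resolvent a z - algebraMap ℂ A (z - Complex.I)⁻¹

section Star

variable [StarRing A] [StarModule ℂ A]

theorem star_algebraMap_ofReal_sub (t : ℝ) :
    star (algebraMap ℂ A t - a) = algebraMap ℂ A t - star a := by
  simp [Algebra.algebraMap_eq_smul_one]

theorem resolvent_mul_sub_mul_star_eq (b : A) (t : ℝ) :
    resolvent a (t : ℂ) * b - b * star (resolvent a (t : ℂ)) =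
      resolventRemainder a t * b - b * star (resolventRemainder a t) +
        ((1 + t ^ 2)⁻¹ : ℝ) • (2 * Complex.I) • b := by
  have h1 : (t : ℂ) - Complex.I ≠ 0 := sub_I_ne_zero_of_im_nonpos (by simp)
  have h2 : (t : ℂ) + Complex.I ≠ 0 := fun h => by simpa using congrArg Complex.im h
  have h3 : (1 + (t : ℂ) ^ 2) = (t - Complex.I) * (t + Complex.I) := by
    linear_combination Complex.I_sq
  have h4 : ((1 + t ^ 2)⁻¹ : ℝ) • (2 * Complex.I) • b =
      ((t : ℂ) - Complex.I)⁻¹ • b - ((t : ℂ) + Complex.I)⁻¹ • b := by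
    rw [← Complex.coe_smul, smul_smul, ← sub_smul]
    congr 1
    push_cast
    rw [h3]
    field_simp
    ring
  have h5 : star ((t : ℂ) - Complex.I)⁻¹ = ((t : ℂ) + Complex.I)⁻¹ := by simp
  rw [h4, resolventRemainder, Algebra.algebraMap_eq_smul_one, star_sub, star_smul, star_one, h5,
    sub_mul, mul_sub, smul_mul_assoc, mul_smul_comm, one_mul, mul_one]
  abel

theorem isSelfAdjoint_integral_resolvent [ContinuousStar A] {b : A} (hb : IsSelfAdjoint b) :
    IsSelfAdjoint (∫ t : ℝ, resolvent a (t : ℂ) * b * star (resolvent a (t : ℂ))) := by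
  refine ((starL' ℝ : A ≃L[ℝ] A).integral_comp_comm _).symm.trans ?_
  congr 1 with t
  exact (hb.conjugate (resolvent a (t : ℂ))).star_eq

end Star

variable [CompleteSpace A]

theorem differentiableOn_resolvent (ha : ∀ μ ∈ spectrum ℂ a, 0 < μ.im) :
    DifferentiableOn ℂ (resolvent a) {z : ℂ | z.im ≤ 0} := fun _ hz =>
  (spectrum.hasDerivAt_resolvent_const_left
    (mem_resolventSet_of_im_nonpos ha hz)).differentiableAt.differentiableWithinAt

theorem continuous_resolvent_ofReal (ha : ∀ μ ∈ spectrum ℂ a, 0 < μ.im) :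
    Continuous fun t : ℝ => resolvent a (t : ℂ) :=
  (differentiableOn_resolvent ha).continuousOn.comp_continuous Complex.continuous_ofReal
    fun t => by simp

theorem isBigO_resolvent_ofReal (a : A) :
    (fun t : ℝ => resolvent a (t : ℂ)) =O[cobounded ℝ] fun t => t⁻¹ :=
  ((spectrum.resolvent_isBigO_inv a).comp_tendsto
    (RCLike.tendsto_ofReal_cobounded_cobounded ℂ)).trans
    (IsBigO.of_norm_right (IsBigO.of_bound 1 (by simp)))

theorem differentiableOn_resolventRemainder (ha : ∀ μ ∈ spectrum ℂ a, 0 < μ.im) :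
    DifferentiableOn ℂ (resolventRemainder a) {z | z.im ≤ 0} := by
  refine (differentiableOn_resolvent ha).sub ?_
  simp only [Algebra.algebraMap_eq_smul_one]
  refine DifferentiableOn.smul_const (DifferentiableOn.inv (by fun_prop) fun z hz => ?_) _
  exact sub_I_ne_zero_of_im_nonpos hz

theorem isBigO_inv_sub_I :
    (fun z : ℂ => (z - Complex.I)⁻¹) =O[cobounded ℂ] fun z => z⁻¹ := by
  refine IsBigO.of_bound 2 ?_
  filter_upwards [eventually_cobounded_le_norm (2 : ℝ)] with z hz
  have h : ‖z‖ - 1 ≤ ‖z - Complex.I‖ := by simpa using norm_sub_norm_le z Complex.I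
  rw [norm_inv, norm_inv, ← div_eq_mul_inv, inv_le_comm₀ (by linarith) (by positivity), inv_div,
    div_le_iff₀ (by positivity)]
  linarith

theorem isBigO_resolventRemainder (a : A) :
    resolventRemainder a =O[cobounded ℂ] fun z => (z ^ 2)⁻¹ := by
  have h : (fun z => resolvent a z * (a - algebraMap ℂ A Complex.I) *
      algebraMap ℂ A (z - Complex.I)⁻¹) =O[cobounded ℂ] fun z => (z ^ 2)⁻¹ := by
    have h1 : (fun z => resolvent a z * (a - algebraMap ℂ A Complex.I)) =O[cobounded ℂ]
        fun z => z⁻¹ * (1 : ℂ) :=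
      (spectrum.resolvent_isBigO_inv a).mul (isBigO_const_const _ one_ne_zero _)
    have h2 : (fun z => algebraMap ℂ A (z - Complex.I)⁻¹) =O[cobounded ℂ] fun z => z⁻¹ :=
      ((Algebra.linearMap ℂ A).toContinuousLinearMap.isBigO_comp _ _).trans isBigO_inv_sub_I
    refine (h1.mul h2).congr_right fun z => ?_
    rw [mul_one, sq, mul_inv]
  refine h.congr' ?_ EventuallyEq.rfl
  filter_upwards [eventually_cobounded_le_norm (2 : ℝ), spectrum.eventually_isUnit_resolvent a]
    with z hz hu
  have hz : z - Complex.I ≠ 0 := fun h => by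
    rw [sub_eq_zero.1 h, Complex.norm_I] at hz
    linarith
  have hmem : z ∈ resolventSet ℂ a := spectrum.isUnit_resolvent.2 hu
  have h3 : a - algebraMap ℂ A Complex.I
      = algebraMap ℂ A (z - Complex.I) - (algebraMap ℂ A z - a) := by
    rw [map_sub]
    abel
  rw [resolventRemainder, h3, mul_sub, resolvent_mul_sub hmem, sub_mul, mul_assoc, ← map_mul,
    mul_inv_cancel₀ hz, map_one, mul_one, one_mul]

theorem integrable_resolventRemainder (ha : ∀ μ ∈ spectrum ℂ a, 0 < μ.im) :
    Integrable fun t : ℝ => resolventRemainder a (t : ℂ) := by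
  refine integrable_of_continuous_of_isBigO_inv_sq
    ((differentiableOn_resolventRemainder ha).continuousOn.comp_continuous
      Complex.continuous_ofReal fun t => by simp) ?_
  exact ((isBigO_resolventRemainder a).comp_tendsto
    (RCLike.tendsto_ofReal_cobounded_cobounded ℂ)).trans
    (IsBigO.of_norm_right (IsBigO.of_bound 1 (by simp)))

theorem integral_resolventRemainder (ha : ∀ μ ∈ spectrum ℂ a, 0 < μ.im) :
    ∫ t : ℝ, resolventRemainder a (t : ℂ) = 0 :=
  integral_ofReal_eq_zero_of_differentiableOn_of_isBigO (differentiableOn_resolventRemainder ha)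
    (isBigO_resolventRemainder a) (integrable_resolventRemainder ha)

variable [StarRing A] [StarModule ℂ A] [ContinuousStar A]

theorem integral_resolvent_mul_sub_mul_star (ha : ∀ μ ∈ spectrum ℂ a, 0 < μ.im) (b : A) :
    ∫ t : ℝ, (resolvent a (t : ℂ) * b - b * star (resolvent a (t : ℂ))) =
      (2 * Real.pi * Complex.I : ℂ) • b := by
  have hi := integrable_resolventRemainder ha
  have hs : Integrable fun t : ℝ => star (resolventRemainder a (t : ℂ)) :=
    (starL' ℝ : A ≃L[ℝ] A).toContinuousLinearMap.integrable_comp hi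
  have hs0 : ∫ t : ℝ, star (resolventRemainder a (t : ℂ)) = 0 := by
    have := (starL' ℝ : A ≃L[ℝ] A).integral_comp_comm (μ := volume)
      fun t : ℝ => resolventRemainder a (t : ℂ)
    simpa [integral_resolventRemainder ha] using this
  have hd : Integrable fun t : ℝ =>
      resolventRemainder a (t : ℂ) * b - b * star (resolventRemainder a (t : ℂ)) :=
    (hi.mul_const b).sub (hs.const_mul b)
  simp_rw [resolvent_mul_sub_mul_star_eq]
  rw [integral_add hd (integrable_inv_one_add_sq.smul_const _),
    integral_sub (hi.mul_const b) (hs.const_mul b), integral_mul_const_of_integrable hi,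
    integral_const_mul_of_integrable hs, hs0, integral_resolventRemainder ha, integral_smul_const,
    integral_univ_inv_one_add_sq, zero_mul, mul_zero, sub_zero, zero_add, ← Complex.coe_smul,
    smul_smul]
  congr 1
  ring

theorem integrable_resolvent_mul_mul_star (ha : ∀ μ ∈ spectrum ℂ a, 0 < μ.im) (b : A) :
    Integrable fun t : ℝ => resolvent a (t : ℂ) * b * star (resolvent a (t : ℂ)) := by
  have hc := continuous_resolvent_ofReal ha
  refine integrable_of_continuous_of_isBigO_inv_sq ((hc.mul continuous_const).mul hc.star) ?_
  have h1 : (fun t : ℝ => resolvent a (t : ℂ) * b) =O[cobounded ℝ] fun t => t⁻¹ * (1 : ℝ) :=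
    (isBigO_resolvent_ofReal a).mul (isBigO_const_const _ one_ne_zero _)
  have h2 : (fun t : ℝ => star (resolvent a (t : ℂ))) =O[cobounded ℝ] fun t => t⁻¹ :=
    ((starL' ℝ : A ≃L[ℝ] A).toContinuousLinearMap.isBigO_comp _ _).trans
      (isBigO_resolvent_ofReal a)
  refine (h1.mul h2).congr_right fun t => ?_
  rw [mul_one, sq, mul_inv]

theorem integral_resolvent_mul_lyapunov_mul_star (ha : ∀ μ ∈ spectrum ℂ a, 0 < μ.im) (b : A) :
    ∫ t : ℝ, resolvent a (t : ℂ) * (a * b - b * star a) * star (resolvent a (t : ℂ)) =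
      (2 * Real.pi * Complex.I : ℂ) • b := by
  rw [← integral_resolvent_mul_sub_mul_star ha]
  congr 1 with t
  have h1 := resolvent_mul_sub (mem_resolventSet_of_im_nonpos ha (z := t) (by simp))
  have h2 := congrArg star h1
  rw [star_mul, star_one, star_algebraMap_ofReal_sub] at h2
  have h3 : a * b - b * star a =
      b * (algebraMap ℂ A t - star a) - (algebraMap ℂ A t - a) * b := by
    rw [mul_sub, sub_mul, Algebra.commutes (t : ℂ) b]
    abel
  rw [h3, mul_sub, sub_mul, ← mul_assoc _ _ b, h1, one_mul, mul_assoc, mul_assoc b, h2, mul_one]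

theorem lyapunov_integral_resolvent (ha : ∀ μ ∈ spectrum ℂ a, 0 < μ.im) (b : A) :
    a * (∫ t : ℝ, resolvent a (t : ℂ) * b * star (resolvent a (t : ℂ))) -
      (∫ t : ℝ, resolvent a (t : ℂ) * b * star (resolvent a (t : ℂ))) * star a =
      (2 * Real.pi * Complex.I : ℂ) • b := by
  have hi := integrable_resolvent_mul_mul_star ha b
  rw [← integral_const_mul_of_integrable hi, ← integral_mul_const_of_integrable hi,
    ← integral_sub (hi.const_mul _) (hi.mul_const _), ← integral_resolvent_mul_sub_mul_star ha]
  congr 1 with t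
  have h1 : (algebraMap ℂ A t - a) * resolvent a (t : ℂ) = 1 :=
    Ring.mul_inverse_cancel _ (mem_resolventSet_of_im_nonpos ha (z := t) (by simp))
  have h2 := congrArg star h1
  rw [star_mul, star_one, star_algebraMap_ofReal_sub] at h2
  generalize resolvent a (t : ℂ) = s at h1 h2 ⊢
  have h3 : a * s = algebraMap ℂ A t * s - 1 := by rw [← h1, sub_mul]; abel
  have h4 : star s * star a = star s * algebraMap ℂ A t - 1 := by rw [← h2, mul_sub]; abel
  rw [← mul_assoc, ← mul_assoc, h3, mul_assoc (s * b), h4, sub_mul, sub_mul, mul_sub, one_mul,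
    mul_one, ← Algebra.commutes (t : ℂ) (star s), ← mul_assoc, ← Algebra.commutes (t : ℂ) (s * b),
    ← mul_assoc]
  abel

end BanachAlgebra

namespace Matrix

variable {n : Type*} [Fintype n] [DecidableEq n]

theorem inv_sub_smul_one {α : Matrix n n ℂ} {z : ℂ} (hz : z ∈ resolventSet ℂ α) :
    (α - z • 1)⁻¹ = -resolvent α z := by
  refine inv_eq_left_inv ?_
  rw [← Algebra.algebraMap_eq_smul_one, ← neg_sub, neg_mul_neg, resolvent_mul_sub hz]

theorem inv_conjTranspose_sub_smul_one {α : Matrix n n ℂ} {t : ℝ}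
    (ht : (t : ℂ) ∈ resolventSet ℂ α) : (αᴴ - (t : ℂ) • 1)⁻¹ = -(resolvent α (t : ℂ))ᴴ := by
  rw [← conjTranspose_neg, ← inv_sub_smul_one ht, conjTranspose_nonsing_inv]
  simp

open scoped Matrix.Norms.L2Operator

theorem eq_smul_integral_resolvent {α : Matrix n n ℂ} (hα : ∀ μ ∈ spectrum ℂ α, 0 < μ.im)
    {P S : Matrix n n ℂ} {c : ℂ}
    (hS : ∀ i j, S i j =
      c * ∫ t : ℝ, ((α - (t : ℂ) • 1)⁻¹ * P * (αᴴ - (t : ℂ) • 1)⁻¹) i j) :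
    S = c • ∫ t : ℝ, resolvent α (t : ℂ) * P * star (resolvent α (t : ℂ)) := by
  ext i j
  have h := (entryLinearMap ℂ ℂ i j).toContinuousLinearMap.integral_comp_comm
    (integrable_resolvent_mul_mul_star hα P)
  rw [hS, smul_apply, smul_eq_mul]
  congr 1
  refine Eq.trans ?_ h
  congr 1 with t
  have ht := mem_resolventSet_of_im_nonpos hα (z := t) (by simp)
  rw [inv_sub_smul_one ht, inv_conjTranspose_sub_smul_one ht, neg_mul, neg_mul_neg]
  rfl

theorem posSemidef_integral_resolvent {α : Matrix n n ℂ} (hα : ∀ μ ∈ spectrum ℂ α, 0 < μ.im)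
    {P : Matrix n n ℂ} (hP : P.PosSemidef) :
    (∫ t : ℝ, resolvent α (t : ℂ) * P * star (resolvent α (t : ℂ))).PosSemidef := by
  have h (t : ℝ) : (resolvent α (t : ℂ) * P * star (resolvent α (t : ℂ))).PosSemidef :=
    hP.mul_mul_conjTranspose_same (resolvent α (t : ℂ))
  refine .of_dotProduct_mulVec_nonneg
    (isSelfAdjoint_integral_resolvent hP.isHermitian.isSelfAdjoint) fun x => ?_
  let L : Matrix n n ℂ →ₗ[ℂ] ℂ :=
    { toFun := fun M => star x ⬝ᵥ M *ᵥ x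
      map_add' := fun M M' => by rw [add_mulVec, dotProduct_add]
      map_smul' := fun c M => by rw [smul_mulVec, dotProduct_smul, RingHom.id_apply] }
  have hL := L.toContinuousLinearMap.integral_comp_comm (integrable_resolvent_mul_mul_star hα P)
  refine le_of_le_of_eq ?_ hL
  exact integral_nonneg fun t => (h t).dotProduct_mulVec_nonneg x

theorem lyapunov_smul_integral_resolvent {α : Matrix n n ℂ}
    (hα : ∀ μ ∈ spectrum ℂ α, 0 < μ.im) (P : Matrix n n ℂ) :
    let S := (1 / (2 * Real.pi) : ℂ) •
      ∫ t : ℝ, resolvent α (t : ℂ) * P * star (resolvent α (t : ℂ))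
    α * S - S * αᴴ = Complex.I • P := by
  intro S
  have h := lyapunov_integral_resolvent hα P
  have hpi : (Real.pi : ℂ) ≠ 0 := Complex.ofReal_ne_zero.2 Real.pi_ne_zero
  rw [mul_smul_comm, smul_mul_assoc, ← smul_sub, ← star_eq_conjTranspose, h, smul_smul]
  congr 1
  field_simp

theorem eq_smul_integral_resolvent_of_lyapunov {α : Matrix n n ℂ}
    (hα : ∀ μ ∈ spectrum ℂ α, 0 < μ.im) {P Z : Matrix n n ℂ}
    (hZ : α * Z - Z * αᴴ = Complex.I • P) :
    Z = (1 / (2 * Real.pi) : ℂ) •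
      ∫ t : ℝ, resolvent α (t : ℂ) * P * star (resolvent α (t : ℂ)) := by
  have h := integral_resolvent_mul_lyapunov_mul_star hα Z
  rw [star_eq_conjTranspose, hZ] at h
  simp_rw [mul_smul_comm, smul_mul_assoc] at h
  rw [integral_smul, mul_comm, mul_smul] at h
  rw [smul_right_injective _ Complex.I_ne_zero h, smul_smul,
    one_div_mul_cancel (by simp), one_smul]

theorem PosSemidef.posDef_of_lyapunov {m : Type*} [Fintype m] {α S : Matrix n n ℂ}
    {Λ : Matrix n m ℂ} (hS : S.PosSemidef) (h : α * S - S * αᴴ = Complex.I • (Λ * Λᴴ))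
    (hspan : Submodule.span ℂ
      {x : n → ℂ | ∃ k : ℕ, ∃ v : m → ℂ, x = (α ^ k * Λ) *ᵥ v} = ⊤) : S.PosDef := by
  refine .of_dotProduct_mulVec_pos hS.isHermitian fun x hx => ?_
  refine (hS.dotProduct_mulVec_nonneg x).lt_of_ne fun h0 => hx ?_
  have hker : ∀ y, S *ᵥ y = 0 → Λᴴ *ᵥ y = 0 ∧ S *ᵥ (αᴴ *ᵥ y) = 0 := by
    intro y hy
    have hyS : star y ᵥ* S = 0 := by
      rw [← hS.isHermitian.eq, ← star_mulVec, hy, star_zero]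
    have h1 := congrArg (fun M => M *ᵥ y) h
    simp only [sub_mulVec, ← mulVec_mulVec, hy, mulVec_zero, zero_sub, smul_mulVec] at h1
    have h2 := congrArg (fun w => star y ⬝ᵥ w) h1
    simp only [dotProduct_neg, dotProduct_mulVec, hyS, zero_vecMul, zero_dotProduct, neg_zero,
      dotProduct_smul] at h2
    have h3 : Λᴴ *ᵥ y = 0 := by
      rw [← dotProduct_star_self_eq_zero, star_mulVec, conjTranspose_conjTranspose,
        dotProduct_mulVec]
      simpa using h2.symm
    rw [h3, mulVec_zero, smul_zero, neg_eq_zero] at h1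
    exact ⟨h3, h1⟩
  have hpow : ∀ k : ℕ, S *ᵥ ((αᴴ ^ k) *ᵥ x) = 0 := by
    intro k
    induction k with
    | zero => simpa using (hS.dotProduct_mulVec_zero_iff x).1 h0.symm
    | succ k ih =>
      rw [pow_succ', ← mulVec_mulVec]
      exact (hker _ ih).2
  have horth : ∀ y ∈ Submodule.span ℂ
      {x : n → ℂ | ∃ k : ℕ, ∃ v : m → ℂ, x = (α ^ k * Λ) *ᵥ v}, star x ⬝ᵥ y = 0 := by
    intro y hy
    induction hy using Submodule.span_induction with
    | mem y hy =>
      obtain ⟨k, v, rfl⟩ := hy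
      have : star x ᵥ* (α ^ k * Λ) = 0 := by
        rw [← conjTranspose_conjTranspose (α ^ k * Λ), ← star_mulVec, conjTranspose_mul,
          ← mulVec_mulVec, conjTranspose_pow, (hker _ (hpow k)).1, star_zero]
      rw [dotProduct_mulVec, this, zero_dotProduct]
    | zero => exact dotProduct_zero _
    | add y z _ _ hy hz => rw [dotProduct_add, hy, hz, add_zero]
    | smul c y _ hy => rw [dotProduct_smul, hy, smul_zero]
  exact dotProduct_star_self_eq_zero.1 (horth x (hspan ▸ Submodule.mem_top))

end Matrix

theorem stmt6 {N k : ℕ}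
    (α : Matrix (Fin N) (Fin N) ℂ)
    (hspec : ∀ μ ∈ spectrum ℂ α, 0 < μ.im)
    (Λ : Matrix (Fin N) (Fin k) ℂ)
    (Sig : Matrix (Fin N) (Fin N) ℂ)
    (hSig : ∀ i j, Sig i j = (1 / (2 * Real.pi) : ℂ) *
      ∫ t : ℝ, ((α - (t : ℂ) • 1)⁻¹ * (Λ * Λᴴ) * (αᴴ - (t : ℂ) • 1)⁻¹) i j) :
    Sig.IsHermitian ∧
    α * Sig - Sig * αᴴ = Complex.I • (Λ * Λᴴ) ∧
    (∀ Z : Matrix (Fin N) (Fin N) ℂ, Z.IsHermitian →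
      α * Z - Z * αᴴ = Complex.I • (Λ * Λᴴ) → Z = Sig) ∧
    Sig.PosSemidef ∧
    (Submodule.span ℂ
      {x : Fin N → ℂ | ∃ n : ℕ, ∃ v : Fin k → ℂ, x = (α ^ n * Λ) *ᵥ v} = ⊤ →
      Sig.PosDef) := by
  have hS := eq_smul_integral_resolvent hspec hSig
  have hLyap : α * Sig - Sig * αᴴ = Complex.I • (Λ * Λᴴ) := by
    rw [hS]
    exact lyapunov_smul_integral_resolvent hspec _
  have hpos : Sig.PosSemidef := by
    rw [hS]
    refine (posSemidef_integral_resolvent hspec (posSemidef_self_mul_conjTranspose Λ)).smul ?_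
    have : (0 : ℝ) ≤ 1 / (2 * Real.pi) := by positivity
    exact_mod_cast Complex.zero_le_real.2 this
  exact ⟨hpos.isHermitian, hLyap,
    fun Z _ hZ => (eq_smul_integral_resolvent_of_lyapunov hspec hZ).trans hS.symm, hpos,
    hpos.posDef_of_lyapunov hLyap⟩
end

section
/- Let γ be an n×n complex matrix and ϑ₁, ϑ₂ be n×m matrices such that the pair {ϑ₁*, γ} is observable (zero kernel) and {γ, ϑ₂} is controllable (full range). Then the algebraic Riccati equation γX − Xγ* = i(Xϑ₁ϑ₁*X − ϑ₂ϑ₂*) has a unique positive definite Hermitian solution X. -/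
open Matrix
open scoped ComplexOrder

/-- An observable pair, phrased as the absence of a nonzero `A`-invariant subspace of `ker C`. -/
def IsObservablePair {ι κ : Type*} [Fintype ι] (C : Matrix κ ι ℂ) (A : Matrix ι ι ℂ) : Prop :=
  ∀ W : Submodule ℂ (ι → ℂ), (∀ x ∈ W, A *ᵥ x ∈ W) → (∀ x ∈ W, C *ᵥ x = 0) → W = ⊥

/-- All eigenvalues lie in the open left half-plane. -/
def IsHurwitz {ι : Type*} [Fintype ι] (A : Matrix ι ι ℂ) : Prop :=
  ∀ (μ : ℂ) (v : ι → ℂ), v ≠ 0 → A *ᵥ v = μ • v → μ.re < 0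

section Preliminaries

variable {ι κ : Type*} [Fintype ι]

lemma star_mulVec_dotProduct_eq [Fintype κ] (M : Matrix κ ι ℂ) (v : ι → ℂ) (w : κ → ℂ) :
    star (M *ᵥ v) ⬝ᵥ w = star v ⬝ᵥ (Mᴴ *ᵥ w) := by
  rw [star_mulVec, dotProduct_mulVec]

lemma star_dotProduct_mul_conjTranspose_mulVec [Fintype κ] (M : Matrix ι κ ℂ) (v : ι → ℂ) :
    star v ⬝ᵥ ((M * Mᴴ) *ᵥ v) = star (Mᴴ *ᵥ v) ⬝ᵥ (Mᴴ *ᵥ v) := by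
  rw [star_mulVec_dotProduct_eq, conjTranspose_conjTranspose, mulVec_mulVec]

lemma conjTranspose_mulVec_eq_zero_of_add_eq_zero {κ' : Type*} [Fintype κ] [Fintype κ']
    {M : Matrix ι κ ℂ} {N : Matrix ι κ' ℂ} {v w : ι → ℂ}
    (h : star v ⬝ᵥ ((M * Mᴴ) *ᵥ v) + star w ⬝ᵥ ((N * Nᴴ) *ᵥ w) = 0) :
    Mᴴ *ᵥ v = 0 ∧ Nᴴ *ᵥ w = 0 := by
  rw [star_dotProduct_mul_conjTranspose_mulVec, star_dotProduct_mul_conjTranspose_mulVec,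
    add_eq_zero_iff_of_nonneg (dotProduct_star_self_nonneg _) (dotProduct_star_self_nonneg _)] at h
  exact h.imp dotProduct_star_self_eq_zero.1 dotProduct_star_self_eq_zero.1

lemma ext_star_dotProduct_mulVec {M N : Matrix ι ι ℂ}
    (h : ∀ v w : ι → ℂ, star v ⬝ᵥ (M *ᵥ w) = star v ⬝ᵥ (N *ᵥ w)) : M = N := by
  classical
  refine ext_of_mulVec_single fun i => ?_
  rw [← sub_eq_zero, ← dotProduct_star_self_eq_zero, dotProduct_sub, h, sub_self]

lemma IsObservablePair.eq_zero_of_eigenvector {C : Matrix κ ι ℂ} {A : Matrix ι ι ℂ}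
    (h : IsObservablePair C A) {μ : ℂ} {v : ι → ℂ} (hA : A *ᵥ v = μ • v) (hC : C *ᵥ v = 0) :
    v = 0 := by
  have hW := h (Submodule.span ℂ {v}) (fun x hx => ?_) (fun x hx => ?_)
  · simpa using hW
  · obtain ⟨a, rfl⟩ := Submodule.mem_span_singleton.1 hx
    rw [mulVec_smul, hA]
    exact Submodule.smul_mem _ _ (Submodule.smul_mem _ _ (Submodule.mem_span_singleton_self v))
  · obtain ⟨a, rfl⟩ := Submodule.mem_span_singleton.1 hx
    rw [mulVec_smul, hC, smul_zero]

end Preliminaries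

section Cayley

variable {ι : Type*} [Fintype ι] [DecidableEq ι]

/-- The Cayley transform, mapping Hurwitz matrices to matrices of spectral radius less than one. -/
noncomputable def cayley (A : Matrix ι ι ℂ) : Matrix ι ι ℂ := (1 + A) * (1 - A)⁻¹

lemma IsHurwitz.isUnit_one_sub {A : Matrix ι ι ℂ} (hA : IsHurwitz A) : IsUnit (1 - A) := by
  rw [← mulVec_injective_iff_isUnit]
  refine (injective_iff_map_eq_zero (1 - A).mulVecLin).2 fun v hv => ?_
  by_contra hv0
  have := hA 1 v hv0 (by
    rw [mulVecLin_apply, sub_mulVec, one_mulVec, sub_eq_zero] at hv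
    rw [one_smul, ← hv])
  norm_num at this

lemma IsHurwitz.norm_lt_one_of_mem_spectrum_cayley {A : Matrix ι ι ℂ} (hA : IsHurwitz A) {μ : ℂ}
    (hμ : μ ∈ spectrum ℂ (cayley A)) : ‖μ‖ < 1 := by
  rw [← spectrum_toLin', ← Module.End.hasEigenvalue_iff_mem_spectrum] at hμ
  obtain ⟨w, hw⟩ := hμ.exists_hasEigenvector
  have hTw : cayley A *ᵥ w = μ • w := by simpa using hw.apply_eq_smul
  set u := (1 - A)⁻¹ *ᵥ w with hu
  have hdet := (isUnit_iff_isUnit_det _).1 hA.isUnit_one_sub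
  have hwu : w = u - A *ᵥ u := by
    calc w = (1 - A) *ᵥ u := by rw [hu, mulVec_mulVec, mul_nonsing_inv _ hdet, one_mulVec]
      _ = u - A *ᵥ u := by rw [sub_mulVec, one_mulVec]
  have hu0 : u ≠ 0 := by
    intro h
    exact hw.2 (by rw [hwu, h, mulVec_zero, sub_zero])
  have key : u + A *ᵥ u = μ • (u - A *ᵥ u) := by
    rw [← hwu, ← hTw, cayley, ← mulVec_mulVec, ← hu, add_mulVec, one_mulVec]
  have hμ1 : 1 + μ ≠ 0 := by
    intro h
    have h' : μ = -1 := by linear_combination h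
    rw [h'] at key
    have h2 : (2 : ℂ) • u = 0 := by linear_combination (norm := module) key
    exact hu0 ((smul_eq_zero.1 h2).resolve_left two_ne_zero)
  have hAu : A *ᵥ u = ((μ - 1) / (1 + μ)) • u := by
    have h3 : (1 + μ) • (A *ᵥ u) = (μ - 1) • u := by linear_combination (norm := module) key
    rw [div_eq_inv_mul, mul_smul, ← h3, smul_smul, inv_mul_cancel₀ hμ1, one_smul]
  have hre := hA _ u hu0 hAu
  rw [Complex.div_re, ← add_div, div_neg_iff] at hre
  have hpos : 0 < Complex.normSq (1 + μ) := Complex.normSq_pos.2 hμ1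
  have hnum := (hre.resolve_left fun h => absurd h.2 hpos.le.not_gt).1
  simp only [Complex.sub_re, Complex.add_re, Complex.one_re, Complex.sub_im, Complex.add_im,
    Complex.one_im] at hnum
  rw [← sq_lt_one_iff₀ (norm_nonneg _), ← Complex.normSq_eq_norm_sq, Complex.normSq_apply]
  linarith

end Cayley

section PowerConvergence

open Filter Topology ENNReal NNReal

lemma tendsto_pow_zero_of_spectrum_norm_lt_one {R : Type*} [NormedRing R] [NormedAlgebra ℂ R]
    [CompleteSpace R] {a : R} (ha : ∀ μ ∈ spectrum ℂ a, ‖μ‖ < 1) :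
    Tendsto (fun k => a ^ k) atTop (𝓝 0) := by
  rcases subsingleton_or_nontrivial R with hR | hR
  · simp [Subsingleton.elim (a ^ _) (0 : R)]
  have hr : spectralRadius ℂ a < 1 := by
    exact_mod_cast spectrum.spectralRadius_lt_of_forall_lt a (r := 1)
      fun μ hμ => by exact_mod_cast ha μ hμ
  obtain ⟨r, hr1, hr2⟩ := ENNReal.lt_iff_exists_nnreal_btwn.1 hr
  have hev := (spectrum.pow_nnnorm_pow_one_div_tendsto_nhds_spectralRadius a).eventually_lt_const hr1
  rw [tendsto_zero_iff_norm_tendsto_zero]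
  have hr2' : r < 1 := by exact_mod_cast hr2
  refine squeeze_zero' (.of_forall fun _ => norm_nonneg _) ?_
    (tendsto_pow_atTop_nhds_zero_of_lt_one r.coe_nonneg (by exact_mod_cast hr2'))
  filter_upwards [hev, eventually_gt_atTop 0] with k hk hk0
  have hk' : (0 : ℝ) < k := by exact_mod_cast hk0
  have := ENNReal.rpow_lt_rpow hk hk'
  rw [← ENNReal.rpow_mul, one_div, inv_mul_cancel₀ hk'.ne', ENNReal.rpow_one,
    ENNReal.rpow_natCast] at this
  exact_mod_cast this.le

attribute [local instance] Matrix.linftyOpNormedRing Matrix.linftyOpNormedAlgebra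

lemma IsHurwitz.tendsto_cayley_pow {ι : Type*} [Fintype ι] [DecidableEq ι] {A : Matrix ι ι ℂ}
    (hA : IsHurwitz A) : Tendsto (fun k => cayley A ^ k) atTop (𝓝 0) :=
  tendsto_pow_zero_of_spectrum_norm_lt_one fun _ => hA.norm_lt_one_of_mem_spectrum_cayley

end PowerConvergence

section Lyapunov

open Filter Topology

variable {ι : Type*} [Fintype ι] [DecidableEq ι]

lemma sub_cayley_conjTranspose_mul_mul_cayley {M N : Matrix ι ι ℂ} (hM : IsHurwitz M)
    (hN : IsHurwitz N) (Z : Matrix ι ι ℂ) :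
    Z - (cayley M)ᴴ * Z * cayley N
      = ((1 - M)⁻¹)ᴴ * (-(2 : ℂ) • (Mᴴ * Z + Z * N)) * (1 - N)⁻¹ := by
  have hdM := (isUnit_iff_isUnit_det _).1 hM.isUnit_one_sub
  have hdN := (isUnit_iff_isUnit_det _).1 hN.isUnit_one_sub
  have h1 : ((1 - M)⁻¹)ᴴ * (1 - M)ᴴ = 1 := by
    rw [← conjTranspose_mul, mul_nonsing_inv _ hdM, conjTranspose_one]
  have h2 : (1 - N) * (1 - N)⁻¹ = 1 := mul_nonsing_inv _ hdN
  have hZ : Z = ((1 - M)⁻¹)ᴴ * ((1 - M)ᴴ * Z * (1 - N)) * (1 - N)⁻¹ := by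
    simp only [Matrix.mul_assoc, h2, Matrix.mul_one]
    rw [← Matrix.mul_assoc, h1, Matrix.one_mul]
  have hT : (cayley M)ᴴ * Z * cayley N
      = ((1 - M)⁻¹)ᴴ * ((1 + M)ᴴ * Z * (1 + N)) * (1 - N)⁻¹ := by
    simp only [cayley, conjTranspose_mul, Matrix.mul_assoc]
  rw [hT]
  nth_rewrite 1 [hZ]
  rw [← Matrix.sub_mul, ← Matrix.mul_sub]
  congr 2
  simp only [conjTranspose_sub, conjTranspose_add, conjTranspose_one]
  rw [neg_smul, two_smul]
  noncomm_ring

/-- A Sylvester equation with Hurwitz coefficients has only the zero solution. -/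
lemma IsHurwitz.eq_zero_of_sylvester {M N Z : Matrix ι ι ℂ} (hM : IsHurwitz M) (hN : IsHurwitz N)
    (h : Mᴴ * Z + Z * N = 0) : Z = 0 := by
  have hstep : Z = (cayley M)ᴴ * Z * cayley N := by
    rw [← sub_eq_zero, sub_cayley_conjTranspose_mul_mul_cayley hM hN, h]
    simp
  have hpow : ∀ k : ℕ, (cayley M ^ k)ᴴ * Z * cayley N ^ k = Z := by
    intro k
    induction k with
    | zero => simp
    | succ k ih =>
      calc (cayley M ^ (k + 1))ᴴ * Z * cayley N ^ (k + 1)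
          = (cayley M ^ k)ᴴ * ((cayley M)ᴴ * Z * cayley N) * cayley N ^ k := by
            simp only [pow_succ', conjTranspose_mul, Matrix.mul_assoc]
        _ = Z := by rw [← hstep, ih]
  have hlim : Tendsto (fun k => (cayley M ^ k)ᴴ * Z * cayley N ^ k) atTop
      (𝓝 ((0 : Matrix ι ι ℂ)ᴴ * Z * 0)) :=
    ((continuous_id.matrix_conjTranspose.tendsto _ |>.comp hM.tendsto_cayley_pow).mul
      tendsto_const_nhds).mul hN.tendsto_cayley_pow
  simp only [hpow, Matrix.mul_zero] at hlim
  exact tendsto_nhds_unique tendsto_const_nhds hlim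

/-- The Lyapunov inequality with a Hurwitz coefficient forces nonnegativity. -/
lemma IsHurwitz.nonneg_of_lyapunov {A X : Matrix ι ι ℂ} (hA : IsHurwitz A)
    (h : ∀ v, (star v ⬝ᵥ ((Aᴴ * X + X * A) *ᵥ v)).re ≤ 0) (v : ι → ℂ) :
    0 ≤ (star v ⬝ᵥ (X *ᵥ v)).re := by
  have hstep : ∀ v, (star (cayley A *ᵥ v) ⬝ᵥ (X *ᵥ (cayley A *ᵥ v))).re
      ≤ (star v ⬝ᵥ (X *ᵥ v)).re := by
    intro v
    have h1 := congrArg (fun Y => (star v ⬝ᵥ (Y *ᵥ v)).re)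
      (sub_cayley_conjTranspose_mul_mul_cayley hA hA X)
    have h2 := h ((1 - A)⁻¹ *ᵥ v)
    rw [star_mulVec_dotProduct_eq, mulVec_mulVec, mulVec_mulVec] at h2
    simp only [sub_mulVec, dotProduct_sub, Matrix.mul_smul, Matrix.smul_mul, smul_mulVec,
      dotProduct_smul, smul_eq_mul, Complex.sub_re] at h1
    rw [star_mulVec_dotProduct_eq, mulVec_mulVec, mulVec_mulVec]
    simp only [Matrix.mul_assoc, neg_mul, Complex.neg_re, Complex.mul_re, Complex.re_ofNat,
      Complex.im_ofNat, zero_mul, sub_zero] at h1 h2 ⊢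
    linarith
  have hpow : ∀ k : ℕ, (star ((cayley A ^ k) *ᵥ v) ⬝ᵥ (X *ᵥ ((cayley A ^ k) *ᵥ v))).re
      ≤ (star v ⬝ᵥ (X *ᵥ v)).re := by
    intro k
    induction k with
    | zero => simp
    | succ k ih =>
      rw [pow_succ', ← mulVec_mulVec]
      exact (hstep _).trans ih
  have hcont : Continuous fun T : Matrix ι ι ℂ => (star (T *ᵥ v) ⬝ᵥ (X *ᵥ (T *ᵥ v))).re := by
    fun_prop
  have hlim := (hcont.tendsto 0).comp hA.tendsto_cayley_pow
  simp only [zero_mulVec, mulVec_zero, dotProduct_zero, Complex.zero_re] at hlim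
  exact le_of_tendsto' hlim hpow

end Lyapunov

lemma star_add_ne_zero_of_re_neg {a b : ℂ} (ha : a.re < 0) (hb : b.re < 0) : star a + b ≠ 0 :=
  fun h => by
    have h := congrArg Complex.re h
    simp at h
    linarith

lemma star_add_ne_zero_of_re_pos {a b : ℂ} (ha : 0 < a.re) (hb : 0 < b.re) : star a + b ≠ 0 :=
  fun h => by
    have h := congrArg Complex.re h
    simp at h
    linarith

section Hamiltonian

variable {ι κ : Type*} [Fintype ι] [Fintype κ]

/-- The sesquilinear symplectic form on `ℂ^ι × ℂ^ι`. -/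
def symplecticForm (u v : (ι → ℂ) × (ι → ℂ)) : ℂ := star u.1 ⬝ᵥ v.2 - star u.2 ⬝ᵥ v.1

lemma symplecticForm_add_left (u u' v : (ι → ℂ) × (ι → ℂ)) :
    symplecticForm (u + u') v = symplecticForm u v + symplecticForm u' v := by
  simp only [symplecticForm, Prod.fst_add, Prod.snd_add, star_add, add_dotProduct]
  ring

lemma symplecticForm_add_right (u v v' : (ι → ℂ) × (ι → ℂ)) :
    symplecticForm u (v + v') = symplecticForm u v + symplecticForm u v' := by
  simp only [symplecticForm, Prod.fst_add, Prod.snd_add, dotProduct_add]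
  ring

lemma symplecticForm_smul_left (a : ℂ) (u v : (ι → ℂ) × (ι → ℂ)) :
    symplecticForm (a • u) v = star a * symplecticForm u v := by
  simp only [symplecticForm, Prod.smul_fst, Prod.smul_snd, star_smul, smul_dotProduct, smul_eq_mul]
  ring

lemma symplecticForm_smul_right (a : ℂ) (u v : (ι → ℂ) × (ι → ℂ)) :
    symplecticForm u (a • v) = a * symplecticForm u v := by
  simp only [symplecticForm, Prod.smul_fst, Prod.smul_snd, dotProduct_smul, smul_eq_mul]
  ring

@[simp]
lemma symplecticForm_zero_left (v : (ι → ℂ) × (ι → ℂ)) : symplecticForm 0 v = 0 := by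
  simp [symplecticForm]

@[simp]
lemma symplecticForm_zero_right (v : (ι → ℂ) × (ι → ℂ)) : symplecticForm v 0 = 0 := by
  simp [symplecticForm]

lemma eq_zero_of_forall_symplecticForm_eq_zero {u : (ι → ℂ) × (ι → ℂ)}
    (h : ∀ v, symplecticForm u v = 0) : u = 0 := by
  have h1 := h (0, u.1)
  have h2 := h (u.2, 0)
  simp only [symplecticForm, dotProduct_zero, sub_zero, zero_sub, neg_eq_zero] at h1 h2
  exact Prod.ext (dotProduct_star_self_eq_zero.1 h1) (dotProduct_star_self_eq_zero.1 h2)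

/-- The Hamiltonian operator of the Riccati equation `Aᴴ X + X A + Q Qᴴ - X B Bᴴ X = 0`. -/
def hamiltonian (A : Matrix ι ι ℂ) (B Q : Matrix ι κ ℂ) :
    Module.End ℂ ((ι → ℂ) × (ι → ℂ)) where
  toFun u := (A *ᵥ u.1 - (B * Bᴴ) *ᵥ u.2, -((Q * Qᴴ) *ᵥ u.1) - Aᴴ *ᵥ u.2)
  map_add' u v := by
    ext1
    · simp only [Prod.fst_add, Prod.snd_add, mulVec_add]; abel
    · simp only [Prod.fst_add, Prod.snd_add, mulVec_add]; abel
  map_smul' a u := by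
    ext1 <;> simp only [Prod.smul_fst, Prod.smul_snd, mulVec_smul, RingHom.id_apply, smul_sub,
      smul_neg]

variable {A : Matrix ι ι ℂ} {B Q : Matrix ι κ ℂ}

lemma symplecticForm_hamiltonian (u v : (ι → ℂ) × (ι → ℂ)) :
    symplecticForm (hamiltonian A B Q u) v = -symplecticForm u (hamiltonian A B Q v) := by
  simp only [symplecticForm, hamiltonian, LinearMap.coe_mk, AddHom.coe_mk, star_sub, star_neg,
    sub_dotProduct, neg_dotProduct, dotProduct_sub, dotProduct_neg, star_mulVec_dotProduct_eq,
    conjTranspose_mul, conjTranspose_conjTranspose]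
  ring

lemma symplecticForm_hamiltonian_sub_smul (a b : ℂ) (u v : (ι → ℂ) × (ι → ℂ)) :
    (star a + b) * symplecticForm u v
      = -symplecticForm ((hamiltonian A B Q - a • (1 : Module.End ℂ ((ι → ℂ) × (ι → ℂ)))) u) v
        - symplecticForm u ((hamiltonian A B Q - b • (1 : Module.End ℂ ((ι → ℂ) × (ι → ℂ)))) v) := by
  have h1 : symplecticForm ((hamiltonian A B Q - a • (1 : Module.End ℂ ((ι → ℂ) × (ι → ℂ)))) u) v
      = symplecticForm (hamiltonian A B Q u) v - star a * symplecticForm u v := by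
    rw [eq_sub_iff_add_eq, ← symplecticForm_smul_left, ← symplecticForm_add_left]
    simp
  have h2 : symplecticForm u ((hamiltonian A B Q - b • (1 : Module.End ℂ ((ι → ℂ) × (ι → ℂ)))) v)
      = symplecticForm u (hamiltonian A B Q v) - b * symplecticForm u v := by
    rw [eq_sub_iff_add_eq, ← symplecticForm_smul_right, ← symplecticForm_add_right]
    simp
  rw [h1, h2, symplecticForm_hamiltonian]
  ring

lemma symplecticForm_eq_zero_of_pow_apply_eq_zero {a b : ℂ} (hab : star a + b ≠ 0) (k l : ℕ) :
    ∀ u v, ((hamiltonian A B Q - a • (1 : Module.End ℂ ((ι → ℂ) × (ι → ℂ)))) ^ k) u = 0 →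
      ((hamiltonian A B Q - b • (1 : Module.End ℂ ((ι → ℂ) × (ι → ℂ)))) ^ l) v = 0 → symplecticForm u v = 0 := by
  induction k generalizing l with
  | zero =>
    intro u v hu _
    have hu : u = 0 := hu
    rw [hu, symplecticForm_zero_left]
  | succ k ihk =>
    induction l with
    | zero =>
      intro u v _ hv
      have hv : v = 0 := hv
      rw [hv, symplecticForm_zero_right]
    | succ l ihl =>
      intro u v hu hv
      refine (mul_eq_zero.1 ?_).resolve_left hab
      rw [symplecticForm_hamiltonian_sub_smul (A := A) (B := B) (Q := Q),
        ihk (l + 1) _ v (by rwa [pow_succ] at hu) hv, ihl u _ hu (by rwa [pow_succ] at hv)]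
      simp

/-- The sum of the generalized eigenspaces whose eigenvalue `μ` satisfies `p μ`. -/
def spectralSubspace {V : Type*} [AddCommGroup V] [Module ℂ V] (f : Module.End ℂ V)
    (p : ℂ → Prop) : Submodule ℂ V :=
  ⨆ μ : {μ : ℂ // p μ}, f.maxGenEigenspace μ

lemma mapsTo_spectralSubspace {V : Type*} [AddCommGroup V] [Module ℂ V] (f : Module.End ℂ V)
    (p : ℂ → Prop) {v : V} (hv : v ∈ spectralSubspace f p) : f v ∈ spectralSubspace f p := by
  have : spectralSubspace f p ≤ (spectralSubspace f p).comap f :=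
    iSup_le fun μ _ hx => Submodule.mem_iSup_of_mem μ
      (f.mapsTo_maxGenEigenspace_of_comm (Commute.refl f) μ hx)
  exact this hv

lemma symplecticForm_eq_zero_of_mem_spectralSubspace {p : ℂ → Prop}
    (hp : ∀ a b, p a → p b → star a + b ≠ 0) {u v : (ι → ℂ) × (ι → ℂ)}
    (hu : u ∈ spectralSubspace (hamiltonian A B Q) p)
    (hv : v ∈ spectralSubspace (hamiltonian A B Q) p) : symplecticForm u v = 0 := by
  induction hu using Submodule.iSup_induction' with
  | zero => simp
  | add x y _ _ hx hy => rw [symplecticForm_add_left, hx, hy, add_zero]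
  | mem a x hx =>
    induction hv using Submodule.iSup_induction' with
    | zero => simp
    | add y z _ _ hy hz => rw [symplecticForm_add_right, hy, hz, add_zero]
    | mem b y hy =>
      obtain ⟨k, hk⟩ := (Module.End.mem_maxGenEigenspace _ _ _).1 hx
      obtain ⟨l, hl⟩ := (Module.End.mem_maxGenEigenspace _ _ _).1 hy
      exact symplecticForm_eq_zero_of_pow_apply_eq_zero (hp a b a.2 b.2) k l x y hk hl

/-- Under observability the Hamiltonian has no eigenvalue on the imaginary axis. -/
lemma eq_zero_of_hamiltonian_apply_eq_smul (hB : IsObservablePair Bᴴ Aᴴ)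
    (hQ : IsObservablePair Qᴴ A) {μ : ℂ} (hμ : μ.re = 0) {u : (ι → ℂ) × (ι → ℂ)}
    (hu : hamiltonian A B Q u = μ • u) : u = 0 := by
  obtain ⟨x, y⟩ := u
  have hstar : star μ = -μ := by
    apply Complex.ext <;> simp [hμ]
  have h1 : A *ᵥ x - (B * Bᴴ) *ᵥ y = μ • x := congrArg Prod.fst hu
  have h2 : -((Q * Qᴴ) *ᵥ x) - Aᴴ *ᵥ y = μ • y := congrArg Prod.snd hu
  have e1 : star x ⬝ᵥ (Aᴴ *ᵥ y) - star y ⬝ᵥ ((B * Bᴴ) *ᵥ y) = -μ * (star x ⬝ᵥ y) := by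
    have := congrArg (fun z => star z ⬝ᵥ y) h1
    simpa only [star_sub, sub_dotProduct, star_mulVec_dotProduct_eq, conjTranspose_mul,
      conjTranspose_conjTranspose, star_smul, hstar, smul_dotProduct, smul_eq_mul] using this
  have e2 : -(star x ⬝ᵥ ((Q * Qᴴ) *ᵥ x)) - star x ⬝ᵥ (Aᴴ *ᵥ y) = μ * (star x ⬝ᵥ y) := by
    have := congrArg (fun z => star x ⬝ᵥ z) h2
    simpa only [dotProduct_sub, dotProduct_neg, dotProduct_smul, smul_eq_mul] using this
  obtain ⟨hQx, hBy⟩ := conjTranspose_mulVec_eq_zero_of_add_eq_zero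
    (M := Q) (N := B) (v := x) (w := y) (by linear_combination -e1 - e2)
  rw [← mulVec_mulVec, hBy, mulVec_zero, sub_zero] at h1
  rw [← mulVec_mulVec, hQx, mulVec_zero, neg_zero, zero_sub, neg_eq_iff_eq_neg, ← neg_smul] at h2
  rw [hQ.eq_zero_of_eigenvector h1 hQx, hB.eq_zero_of_eigenvector h2 hBy, Prod.mk_zero_zero]

lemma spectralSubspace_sup_eq_top (hB : IsObservablePair Bᴴ Aᴴ) (hQ : IsObservablePair Qᴴ A) :
    spectralSubspace (hamiltonian A B Q) (fun μ => μ.re < 0)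
      ⊔ spectralSubspace (hamiltonian A B Q) (fun μ => 0 < μ.re) = ⊤ := by
  rw [eq_top_iff, ← Module.End.iSup_maxGenEigenspace_eq_top (hamiltonian A B Q)]
  refine iSup_le fun μ => ?_
  rcases lt_trichotomy μ.re 0 with h | h | h
  · exact le_sup_of_le_left (le_iSup (fun ν : {ν : ℂ // ν.re < 0} =>
      (hamiltonian A B Q).maxGenEigenspace ν) ⟨μ, h⟩)
  · have hinj : Function.Injective (hamiltonian A B Q - μ • (1 : Module.End ℂ ((ι → ℂ) × (ι → ℂ)))) :=
      (injective_iff_map_eq_zero _).2 fun u hu =>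
        eq_zero_of_hamiltonian_apply_eq_smul hB hQ h (by simpa [sub_eq_zero] using hu)
    intro u hu
    obtain ⟨k, hk⟩ := (Module.End.mem_maxGenEigenspace _ _ _).1 hu
    have hu0 : u = 0 := by
      rw [Module.End.pow_apply] at hk
      exact hinj.iterate k (hk.trans (Function.iterate_fixed (map_zero _) k).symm)
    rw [hu0]
    exact Submodule.zero_mem _
  · exact le_sup_of_le_right (le_iSup (fun ν : {ν : ℂ // 0 < ν.re} =>
      (hamiltonian A B Q).maxGenEigenspace ν) ⟨μ, h⟩)

/-- An isotropic invariant subspace of the Hamiltonian is a graph over the first coordinate. -/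
lemma eq_zero_of_zero_mk_mem (hB : IsObservablePair Bᴴ Aᴴ)
    {W : Submodule ℂ ((ι → ℂ) × (ι → ℂ))} (hinv : ∀ u ∈ W, hamiltonian A B Q u ∈ W)
    (hiso : ∀ u ∈ W, ∀ v ∈ W, symplecticForm u v = 0) {y : ι → ℂ} (hy : (0, y) ∈ W) : y = 0 := by
  have hBW : ∀ z, ((0 : ι → ℂ), z) ∈ W → Bᴴ *ᵥ z = 0 := by
    intro z hz
    have h := hiso _ hz _ (hinv _ hz)
    simp only [symplecticForm, hamiltonian, LinearMap.coe_mk, AddHom.coe_mk, star_zero,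
      zero_dotProduct, mulVec_zero, zero_sub, dotProduct_neg, neg_neg] at h
    rw [star_dotProduct_mul_conjTranspose_mulVec] at h
    exact dotProduct_star_self_eq_zero.1 h
  have hbot := hB (W.comap (LinearMap.inr ℂ (ι → ℂ) (ι → ℂ))) (fun z hz => ?_) hBW
  · have : y ∈ W.comap (LinearMap.inr ℂ (ι → ℂ) (ι → ℂ)) := hy
    rwa [hbot, Submodule.mem_bot] at this
  · have h := W.neg_mem (hinv _ hz)
    have he : -hamiltonian A B Q (LinearMap.inr ℂ (ι → ℂ) (ι → ℂ) z) = (0, Aᴴ *ᵥ z) := by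
      simp [hamiltonian, ← mulVec_mulVec, hBW z hz]
    rwa [he] at h

lemma injective_fst_comp_subtype (hB : IsObservablePair Bᴴ Aᴴ)
    {W : Submodule ℂ ((ι → ℂ) × (ι → ℂ))} (hinv : ∀ u ∈ W, hamiltonian A B Q u ∈ W)
    (hiso : ∀ u ∈ W, ∀ v ∈ W, symplecticForm u v = 0) :
    Function.Injective (LinearMap.fst ℂ (ι → ℂ) (ι → ℂ) ∘ₗ W.subtype) := by
  refine (injective_iff_map_eq_zero _).2 ?_
  rintro ⟨⟨x, y⟩, hxy⟩ hx
  obtain rfl : x = 0 := hx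
  simp [eq_zero_of_zero_mk_mem hB hinv hiso hxy]

/-- The stable subspace of the Hamiltonian is the graph of a matrix. -/
lemma exists_graph_stable [DecidableEq ι] (hB : IsObservablePair Bᴴ Aᴴ)
    (hQ : IsObservablePair Qᴴ A) :
    ∃ X : Matrix ι ι ℂ, ∀ x,
      (x, X *ᵥ x) ∈ spectralSubspace (hamiltonian A B Q) (fun μ => μ.re < 0) := by
  set Wn := spectralSubspace (hamiltonian A B Q) (fun μ => μ.re < 0)
  set Wp := spectralSubspace (hamiltonian A B Q) (fun μ => 0 < μ.re)
  have hn := injective_fst_comp_subtype hB (W := Wn)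
    (fun _ => mapsTo_spectralSubspace _ _) fun _ hu _ hv =>
      symplecticForm_eq_zero_of_mem_spectralSubspace (fun _ _ => star_add_ne_zero_of_re_neg) hu hv
  have hp := injective_fst_comp_subtype hB (W := Wp)
    (fun _ => mapsTo_spectralSubspace _ _) fun _ hu _ hv =>
      symplecticForm_eq_zero_of_mem_spectralSubspace (fun _ _ => star_add_ne_zero_of_re_pos) hu hv
  have hle := LinearMap.finrank_le_finrank_of_injective hp
  have hle' := LinearMap.finrank_le_finrank_of_injective hn
  have hsum := Submodule.finrank_add_le_finrank_add_finrank Wn Wp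
  rw [spectralSubspace_sup_eq_top hB hQ, finrank_top, Module.finrank_prod] at hsum
  let e := LinearEquiv.ofBijective _
    ⟨hn, (LinearMap.injective_iff_surjective_of_finrank_eq_finrank (by omega)).1 hn⟩
  refine ⟨LinearMap.toMatrix' (LinearMap.snd ℂ _ _ ∘ₗ Wn.subtype ∘ₗ e.symm.toLinearMap),
    fun x => ?_⟩
  suffices h : (x, LinearMap.toMatrix' (LinearMap.snd ℂ _ _ ∘ₗ Wn.subtype ∘ₗ
      e.symm.toLinearMap) *ᵥ x) = (e.symm x : (ι → ℂ) × (ι → ℂ)) from h ▸ (e.symm x).2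
  refine Prod.ext (e.apply_symm_apply x).symm ?_
  simp [LinearMap.toMatrix'_mulVec]

end Hamiltonian

section Riccati

variable {ι κ : Type*} [Fintype ι] [Fintype κ] {A X : Matrix ι ι ℂ} {B Q : Matrix ι κ ℂ}

lemma lyapunov_of_riccati (hX : X.IsHermitian)
    (h : Aᴴ * X + X * A + Q * Qᴴ - X * (B * Bᴴ) * X = 0) :
    (A - B * Bᴴ * X)ᴴ * X + X * (A - B * Bᴴ * X) = -(Q * Qᴴ + (X * B) * (X * B)ᴴ) := by
  rw [← sub_eq_zero, ← h]
  simp only [conjTranspose_sub, conjTranspose_mul, conjTranspose_conjTranspose, hX.eq,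
    Matrix.sub_mul, Matrix.mul_sub, Matrix.mul_assoc]
  abel

/-- Along the closed-loop eigenvectors observability excludes the vanishing of the cost. -/
lemma eq_zero_of_closedLoop_eigenvector (hX : X.IsHermitian) (hQ : IsObservablePair Qᴴ A) {μ : ℂ}
    {v : ι → ℂ} (hv : (A - B * Bᴴ * X) *ᵥ v = μ • v)
    (h : star v ⬝ᵥ ((Q * Qᴴ) *ᵥ v) + star v ⬝ᵥ (((X * B) * (X * B)ᴴ) *ᵥ v) = 0) : v = 0 := by
  obtain ⟨h1, h2⟩ := conjTranspose_mulVec_eq_zero_of_add_eq_zero h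
  rw [conjTranspose_mul, hX.eq] at h2
  rw [sub_mulVec, Matrix.mul_assoc, ← mulVec_mulVec, h2, mulVec_zero, sub_zero] at hv
  exact hQ.eq_zero_of_eigenvector hv h1

lemma isHurwitz_of_posDef (hX : X.PosDef) (hQ : IsObservablePair Qᴴ A)
    (h : Aᴴ * X + X * A + Q * Qᴴ - X * (B * Bᴴ) * X = 0) : IsHurwitz (A - B * Bᴴ * X) := by
  intro μ v hv0 hv
  by_contra! hμ
  have hlyap := congrArg (fun Y => star v ⬝ᵥ (Y *ᵥ v)) (lyapunov_of_riccati hX.isHermitian h)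
  simp only [add_mulVec, neg_mulVec, dotProduct_add, dotProduct_neg] at hlyap
  rw [← mulVec_mulVec, ← star_mulVec_dotProduct_eq, ← mulVec_mulVec, hv, star_smul,
    smul_dotProduct, mulVec_smul, dotProduct_smul, smul_eq_mul, smul_eq_mul, ← add_mul] at hlyap
  have hμ' : 0 ≤ star μ + μ := by
    rw [Complex.le_def]
    constructor
    · simpa using hμ
    · simp
  have hpos := mul_nonneg hμ' (hX.dotProduct_mulVec_pos hv0).le
  rw [hlyap, neg_nonneg] at hpos
  refine hv0 (eq_zero_of_closedLoop_eigenvector hX.isHermitian hQ hv (hpos.antisymm ?_))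
  rw [star_dotProduct_mul_conjTranspose_mulVec, star_dotProduct_mul_conjTranspose_mulVec]
  exact add_nonneg (dotProduct_star_self_nonneg _) (dotProduct_star_self_nonneg _)

lemma riccati_unique [DecidableEq ι] {Y : Matrix ι ι ℂ} (hX : X.PosDef) (hY : Y.PosDef)
    (hQ : IsObservablePair Qᴴ A) (hRX : Aᴴ * X + X * A + Q * Qᴴ - X * (B * Bᴴ) * X = 0)
    (hRY : Aᴴ * Y + Y * A + Q * Qᴴ - Y * (B * Bᴴ) * Y = 0) : X = Y := by
  refine sub_eq_zero.1 ((isHurwitz_of_posDef hX hQ hRX).eq_zero_of_sylvester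
    (isHurwitz_of_posDef hY hQ hRY) ?_)
  rw [← sub_self (0 : Matrix ι ι ℂ)]
  nth_rewrite 1 [← hRX]
  rw [← hRY]
  simp only [conjTranspose_sub, conjTranspose_mul, conjTranspose_conjTranspose,
    hX.isHermitian.eq]
  noncomm_ring

lemma posDef_of_isHurwitz [DecidableEq ι] (hX : X.IsHermitian) (hQ : IsObservablePair Qᴴ A)
    (h : Aᴴ * X + X * A + Q * Qᴴ - X * (B * Bᴴ) * X = 0) (hA : IsHurwitz (A - B * Bᴴ * X)) :
    X.PosDef := by
  have hlyap := lyapunov_of_riccati hX h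
  have hcost : ∀ v : ι → ℂ,
      0 ≤ star v ⬝ᵥ ((Q * Qᴴ) *ᵥ v) + star v ⬝ᵥ (((X * B) * (X * B)ᴴ) *ᵥ v) := fun v => by
    rw [star_dotProduct_mul_conjTranspose_mulVec, star_dotProduct_mul_conjTranspose_mulVec]
    exact add_nonneg (dotProduct_star_self_nonneg _) (dotProduct_star_self_nonneg _)
  have hre : ∀ v : ι → ℂ, 0 ≤ (star v ⬝ᵥ (X *ᵥ v)).re := hA.nonneg_of_lyapunov fun v => by
    rw [hlyap, neg_mulVec, add_mulVec, dotProduct_neg, dotProduct_add, Complex.neg_re]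
    exact neg_nonpos.2 (Complex.le_def.1 (hcost v)).1
  have hsemi : X.PosSemidef := .of_dotProduct_mulVec_nonneg hX fun v =>
    Complex.le_def.2 ⟨hre v, (hX.im_star_dotProduct_mulVec_self v).symm⟩
  have hker : ∀ v, X *ᵥ v = 0 → Qᴴ *ᵥ v = 0 ∧ X *ᵥ (A *ᵥ v) = 0 := by
    intro v hv
    have hR := congrArg (fun Y => Y *ᵥ v) h
    simp only [sub_mulVec, add_mulVec, ← mulVec_mulVec, hv, mulVec_zero, sub_zero, zero_add,
      zero_mulVec] at hR
    have hq := congrArg (fun w => star v ⬝ᵥ w) hR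
    have hvX : star v ⬝ᵥ (X *ᵥ (A *ᵥ v)) = 0 := by
      rw [← hX.eq, ← star_mulVec_dotProduct_eq, hv, star_zero, zero_dotProduct]
    simp only [dotProduct_add, hvX, zero_add, dotProduct_zero] at hq
    rw [mulVec_mulVec, star_dotProduct_mul_conjTranspose_mulVec, dotProduct_star_self_eq_zero] at hq
    refine ⟨hq, ?_⟩
    rwa [hq, mulVec_zero, add_zero] at hR
  have hbot := hQ (LinearMap.ker X.mulVecLin) (fun v hv => (hker v hv).2)
    fun v hv => (hker v hv).1
  refine .of_dotProduct_mulVec_pos hX fun v hv => ?_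
  refine lt_of_le_of_ne (hsemi.dotProduct_mulVec_nonneg v) fun h0 => hv ?_
  have : v ∈ LinearMap.ker X.mulVecLin := (hsemi.dotProduct_mulVec_zero_iff v).1 h0.symm
  rwa [hbot, Submodule.mem_bot] at this

/-- Existence of a stabilizing Hermitian solution of the Riccati equation. -/
lemma exists_stabilizing_solution [DecidableEq ι] (hB : IsObservablePair Bᴴ Aᴴ)
    (hQ : IsObservablePair Qᴴ A) :
    ∃ X : Matrix ι ι ℂ, X.IsHermitian ∧ Aᴴ * X + X * A + Q * Qᴴ - X * (B * Bᴴ) * X = 0 ∧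
      IsHurwitz (A - B * Bᴴ * X) := by
  obtain ⟨X, hX⟩ := exists_graph_stable hB hQ
  set W := spectralSubspace (hamiltonian A B Q) (fun μ => μ.re < 0) with hW
  have hiso : ∀ u ∈ W, ∀ v ∈ W, symplecticForm u v = 0 := fun _ hu _ hv =>
    symplecticForm_eq_zero_of_mem_spectralSubspace (fun _ _ => star_add_ne_zero_of_re_neg) hu hv
  have hinv : ∀ u ∈ W, hamiltonian A B Q u ∈ W := fun _ => mapsTo_spectralSubspace _ _
  have hclosed : ∀ x : ι → ℂ, hamiltonian A B Q (x, X *ᵥ x)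
      = ((A - B * Bᴴ * X) *ᵥ x, X *ᵥ ((A - B * Bᴴ * X) *ᵥ x)) := by
    intro x
    have hfst : (hamiltonian A B Q (x, X *ᵥ x)).1 = (A - B * Bᴴ * X) *ᵥ x := by
      simp [hamiltonian, sub_mulVec]
    refine Prod.ext hfst (sub_eq_zero.1 (eq_zero_of_zero_mk_mem hB hinv hiso ?_))
    have := W.sub_mem (hinv _ (hX x)) (hX ((A - B * Bᴴ * X) *ᵥ x))
    rwa [← Prod.mk.eta (p := hamiltonian A B Q (x, X *ᵥ x)), hfst, Prod.mk_sub_mk, sub_self] at this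
  refine ⟨X, ext_star_dotProduct_mulVec fun v w => ?_,
    ext_star_dotProduct_mulVec fun v w => ?_, fun μ v hv0 hv => ?_⟩
  · have := hiso _ (hX v) _ (hX w)
    rw [← star_mulVec_dotProduct_eq]
    exact (sub_eq_zero.1 this).symm
  · have hsnd := congrArg Prod.snd (hclosed w)
    simp only [hamiltonian, LinearMap.coe_mk, AddHom.coe_mk] at hsnd
    congr 1
    rw [← sub_eq_zero, ← sub_eq_zero.2 hsnd.symm]
    simp only [sub_mulVec, add_mulVec, mulVec_sub, mulVec_mulVec, Matrix.mul_assoc, zero_mulVec]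
    abel
  · by_contra! hμ
    have hHv : hamiltonian A B Q (v, X *ᵥ v) = μ • (v, X *ᵥ v) := by
      rw [hclosed, hv, mulVec_smul, Prod.smul_mk]
    have hne : (v, X *ᵥ v) ≠ 0 := fun h => hv0 (congrArg Prod.fst h)
    rcases hμ.eq_or_lt with h0 | hpos
    · exact hne (eq_zero_of_hamiltonian_apply_eq_smul hB hQ h0.symm hHv)
    · refine hne (eq_zero_of_forall_symplecticForm_eq_zero fun w => ?_)
      have hmem : (v, X *ᵥ v) ∈ spectralSubspace (hamiltonian A B Q) (fun μ => 0 < μ.re) :=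
        Submodule.mem_iSup_of_mem ⟨μ, hpos⟩
          (Module.End.eigenspace_le_maxGenEigenspace (Module.End.mem_eigenspace_iff.2 hHv))
      have hw : w ∈ W ⊔ spectralSubspace (hamiltonian A B Q) (fun μ => 0 < μ.re) := by
        rw [hW, spectralSubspace_sup_eq_top hB hQ]
        exact Submodule.mem_top
      obtain ⟨w₁, hw₁, w₂, hw₂, rfl⟩ := Submodule.mem_sup.1 hw
      rw [symplecticForm_add_right, hiso _ (hX v) _ hw₁,
        symplecticForm_eq_zero_of_mem_spectralSubspace (fun _ _ => star_add_ne_zero_of_re_pos)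
          hmem hw₂, add_zero]

theorem existsUnique_posDef_riccati [DecidableEq ι] (hB : IsObservablePair Bᴴ Aᴴ)
    (hQ : IsObservablePair Qᴴ A) :
    ∃! X : Matrix ι ι ℂ, X.PosDef ∧ Aᴴ * X + X * A + Q * Qᴴ - X * (B * Bᴴ) * X = 0 := by
  obtain ⟨X, hX, hR, hA⟩ := exists_stabilizing_solution hB hQ
  have hpos := posDef_of_isHurwitz hX hQ hR hA
  exact ⟨X, ⟨hpos, hR⟩, fun Y hY => riccati_unique hY.1 hpos hQ hY.2 hR⟩

end Riccati

section PowerCriteria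

variable {n m : ℕ} {γ : Matrix (Fin n) (Fin n) ℂ}

lemma isObservablePair_of_forall_pow {C : Matrix (Fin m) (Fin n) ℂ} {c : ℂ} (hc : c ≠ 0)
    (h : ∀ x : Fin n → ℂ, (∀ k < n, C *ᵥ ((γ ^ k) *ᵥ x) = 0) → x = 0) :
    IsObservablePair C (c • γ) := by
  intro W hW hC
  have hpow : ∀ k : ℕ, ∀ x ∈ W, (γ ^ k) *ᵥ x ∈ W := by
    intro k
    induction k with
    | zero => simp
    | succ k ih =>
      intro x hx
      rw [pow_succ, ← mulVec_mulVec]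
      refine ih _ ?_
      have := W.smul_mem c⁻¹ (hW x hx)
      rwa [smul_mulVec, smul_smul, inv_mul_cancel₀ hc, one_smul] at this
  exact (Submodule.eq_bot_iff W).2 fun x hx => h x fun k _ => hC _ (hpow k x hx)

lemma eq_zero_of_span_eq_top {ϑ : Matrix (Fin n) (Fin m) ℂ}
    (h : Submodule.span ℂ
      {x : Fin n → ℂ | ∃ k < n, ∃ v : Fin m → ℂ, x = (γ ^ k * ϑ) *ᵥ v} = ⊤) (x : Fin n → ℂ)
    (hx : ∀ k < n, ϑᴴ *ᵥ ((γᴴ ^ k) *ᵥ x) = 0) : x = 0 := by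
  have hmem : x ∈ Submodule.span ℂ
      {x : Fin n → ℂ | ∃ k < n, ∃ v : Fin m → ℂ, x = (γ ^ k * ϑ) *ᵥ v} := h ▸ Submodule.mem_top
  suffices ∀ y ∈ Submodule.span ℂ
      {x : Fin n → ℂ | ∃ k < n, ∃ v : Fin m → ℂ, x = (γ ^ k * ϑ) *ᵥ v}, star x ⬝ᵥ y = 0 from
    dotProduct_star_self_eq_zero.1 (this x hmem)
  intro y hy
  induction hy using Submodule.span_induction with
  | zero => simp
  | add y z _ _ hy hz => rw [dotProduct_add, hy, hz, add_zero]
  | smul a y _ hy => rw [dotProduct_smul, hy, smul_zero]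
  | mem y hy =>
    obtain ⟨k, hk, v, rfl⟩ := hy
    have hk := hx k hk
    rw [← conjTranspose_pow, mulVec_mulVec, ← conjTranspose_mul] at hk
    rw [← conjTranspose_conjTranspose (γ ^ k * ϑ), ← star_mulVec_dotProduct_eq, hk, star_zero,
      zero_dotProduct]

end PowerCriteria

theorem stmt16 {n m : ℕ}
    (γ : Matrix (Fin n) (Fin n) ℂ)
    (ϑ₁ ϑ₂ : Matrix (Fin n) (Fin m) ℂ)
    (hobs : ∀ x : Fin n → ℂ, (∀ k < n, ϑ₁ᴴ *ᵥ ((γ ^ k) *ᵥ x) = 0) → x = 0)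
    (hctrl : Submodule.span ℂ
      {x : Fin n → ℂ | ∃ k < n, ∃ v : Fin m → ℂ, x = (γ ^ k * ϑ₂) *ᵥ v} = ⊤) :
    ∃! X : Matrix (Fin n) (Fin n) ℂ, X.PosDef ∧
      γ * X - X * γᴴ = Complex.I • (X * ϑ₁ * ϑ₁ᴴ * X - ϑ₂ * ϑ₂ᴴ) := by
  have hA : (Complex.I • γᴴ)ᴴ = -Complex.I • γ := by simp [conjTranspose_smul]
  have hB : IsObservablePair ϑ₁ᴴ (Complex.I • γᴴ)ᴴ := by
    rw [hA]
    exact isObservablePair_of_forall_pow (neg_ne_zero.2 Complex.I_ne_zero) hobs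
  have hQ : IsObservablePair ϑ₂ᴴ (Complex.I • γᴴ) :=
    isObservablePair_of_forall_pow Complex.I_ne_zero (eq_zero_of_span_eq_top hctrl)
  refine (existsUnique_congr fun X => and_congr_right fun _ => ?_).1
    (existsUnique_posDef_riccati hB hQ)
  have hmul : (Complex.I • γᴴ)ᴴ * X + X * (Complex.I • γᴴ) + ϑ₂ * ϑ₂ᴴ - X * (ϑ₁ * ϑ₁ᴴ) * X
      = -Complex.I • (γ * X - X * γᴴ - Complex.I • (X * ϑ₁ * ϑ₁ᴴ * X - ϑ₂ * ϑ₂ᴴ)) := by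
    rw [hA, smul_sub (-Complex.I) _ (Complex.I • _), smul_smul, neg_mul, Complex.I_mul_I, neg_neg,
      one_smul, smul_sub, Matrix.smul_mul, Matrix.mul_smul, neg_smul, neg_smul]
    simp only [Matrix.mul_assoc]
    abel
  rw [hmul, smul_eq_zero_iff_right (neg_ne_zero.2 Complex.I_ne_zero), sub_eq_zero]
end

section
/- Every strictly proper rational m×m matrix function φ admits a minimal realization φ(λ) = iθ₁*(λI_N − β)⁻¹θ₂ with the additional symmetry property β − β* = i(θ₁θ₁* − θ₂θ₂*). -/
open Matrix

/-- The value at `lam` of the transfer function of the realization `(γ, ϑ₁, ϑ₂)`. -/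
noncomputable def transfer {ι ν : Type*} [Fintype ι] [DecidableEq ι] (γ : Matrix ι ι ℂ)
    (ϑ₁ ϑ₂ : Matrix ι ν ℂ) (lam : ℂ) : Matrix ν ν ℂ :=
  ϑ₁ᴴ * (lam • (1 : Matrix ι ι ℂ) - γ)⁻¹ * ϑ₂

/-- There is a realization on the same state space which has the symmetry property and whose
transfer function is a restriction of that of `(γ, ϑ₁, ϑ₂)`. -/
def HasSymmetricRealization {ι ν : Type*} [Fintype ι] [DecidableEq ι] [Fintype ν]
    (γ : Matrix ι ι ℂ) (ϑ₁ ϑ₂ : Matrix ι ν ℂ) : Prop :=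
  ∃ (β : Matrix ι ι ℂ) (θ₁ θ₂ : Matrix ι ν ℂ),
    (∀ lam : ℂ, IsUnit (lam • (1 : Matrix ι ι ℂ) - β) →
      IsUnit (lam • (1 : Matrix ι ι ℂ) - γ) ∧ transfer γ ϑ₁ ϑ₂ lam = transfer β θ₁ θ₂ lam) ∧
    β - βᴴ = Complex.I • (θ₁ * θ₁ᴴ - θ₂ * θ₂ᴴ)

section Riccati

open scoped ComplexOrder

open scoped MatrixOrder Matrix.Norms.L2Operator in
/-- A positive semidefinite matrix is dominated by a multiple of the identity. -/
theorem Matrix.PosSemidef.exists_smul_one_sub {ι : Type*} [Fintype ι] [DecidableEq ι]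
    {H : Matrix ι ι ℂ} (hH : H.PosSemidef) :
    ∃ r : ℝ, 0 ≤ r ∧ (r • (1 : Matrix ι ι ℂ) - H).PosSemidef := by
  refine ⟨‖H‖, norm_nonneg _, ?_⟩
  have h := IsSelfAdjoint.le_algebraMap_norm_self (a := H) hH.isHermitian
  rwa [Matrix.le_iff, Algebra.algebraMap_eq_smul_one] at h

open scoped Matrix.Norms.L2Operator in
theorem Matrix.exists_pos_isUnit_one_sub_smul {ι : Type*} [Fintype ι] [DecidableEq ι]
    (F : Matrix ι ι ℂ) : ∃ ε : ℝ, 0 < ε ∧ IsUnit (1 - ε • F) := by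
  refine ⟨(‖F‖ + 1)⁻¹, by positivity, isUnit_one_sub_of_norm_lt_one ?_⟩
  rw [norm_smul, norm_inv, Real.norm_of_nonneg (by positivity), inv_mul_lt_iff₀ (by positivity)]
  simp

/-- The filter Riccati expression. -/
def riccati {ι : Type*} [Fintype ι] (A Q K X : Matrix ι ι ℂ) : Matrix ι ι ℂ :=
  A * X + X * Aᴴ + Q - X * K * X

theorem Matrix.PosSemidef.exists_pos_sub_smul {ι : Type*} [Fintype ι] [DecidableEq ι]
    {P K : Matrix ι ι ℂ} (hP : P.PosSemidef) (hK : K.PosSemidef) :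
    ∃ c : ℝ, 0 < c ∧ ∀ t, 0 ≤ t → t ≤ c → (P - t • (P * K * P)).PosSemidef := by
  obtain ⟨S, rfl⟩ : ∃ S : Matrix ι ι ℂ, P = Sᴴ * S := by
    open scoped MatrixOrder in
    exact CStarAlgebra.nonneg_iff_eq_star_mul_self.mp (Matrix.nonneg_iff_posSemidef.mpr hP)
  obtain ⟨r, hr, hH⟩ := (hK.mul_mul_conjTranspose_same S).exists_smul_one_sub
  refine ⟨(r + 1)⁻¹, by positivity, fun t ht htc ↦ ?_⟩
  have htr : 0 ≤ 1 - t * r := by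
    have := mul_le_mul_of_nonneg_right htc (by positivity : 0 ≤ r + 1)
    rw [inv_mul_cancel₀ (by positivity)] at this
    nlinarith
  have key := ((PosSemidef.one.smul htr).add (hH.smul ht)).conjTranspose_mul_mul_same S
  convert key using 1
  simp only [mul_add, add_mul, mul_sub, sub_mul, smul_mul_assoc, mul_smul_comm, smul_sub,
    mul_one, ← mul_assoc]
  module

/-- A Riccati subsolution that is not a solution can be strictly increased. -/
theorem exists_riccati_add_posSemidef {ι : Type*} [Fintype ι] [DecidableEq ι]
    {A Q K X : Matrix ι ι ℂ} (hK : K.PosSemidef) (hX : X.IsHermitian)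
    (hR : (riccati A Q K X).PosSemidef) (hne : riccati A Q K X ≠ 0) :
    ∃ D : Matrix ι ι ℂ, D.PosSemidef ∧ D ≠ 0 ∧ (riccati A Q K (X + D)).PosSemidef := by
  set R := riccati A Q K X with hRdef
  set F := A - X * K with hF
  have hFH : Fᴴ = Aᴴ - K * X := by
    simp [hF, hX.eq, hK.isHermitian.eq]
  obtain ⟨ε, hε, hU⟩ := exists_pos_isUnit_one_sub_smul F
  set U := 1 - ε • F with hUdef
  have hUdet := (isUnit_iff_isUnit_det U).mp hU
  set P := U⁻¹ * R * U⁻¹ᴴ with hPdef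
  have hP : P.PosSemidef := hR.mul_mul_conjTranspose_same _
  have hUP : U * P * Uᴴ = R := by
    rw [hPdef, conjTranspose_nonsing_inv]
    have : IsUnit Uᴴ.det := by rw [det_conjTranspose]; exact hUdet.star
    simp only [← mul_assoc]
    rw [mul_nonsing_inv U hUdet, one_mul, mul_assoc, nonsing_inv_mul _ this, mul_one]
  obtain ⟨c, hc, hPc⟩ := hP.exists_pos_sub_smul hK
  set t := min ε (c / ε) with ht
  have ht0 : 0 < t := lt_min hε (by positivity)
  have htε : t ≤ ε := min_le_left _ _
  have htc : t * ε ≤ c := (le_div_iff₀ hε).mp (min_le_right _ _)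
  refine ⟨t • P, hP.smul ht0.le, smul_ne_zero ht0.ne' ?_, ?_⟩
  · rintro h
    rw [h] at hUP
    exact hne (by rw [← hUP]; simp)
  have h1 : 0 ≤ 1 - t / ε := sub_nonneg.mpr ((div_le_one hε).mpr htε)
  have key := ((hR.smul h1).add ((hPc (t * ε) (by positivity) htc).smul
    (by positivity : 0 ≤ t / ε))).add
      ((hP.mul_mul_conjTranspose_same F).smul (by positivity : 0 ≤ t * ε))
  convert key using 1
  have hexp : riccati A Q K (X + t • P) = R + t • (F * P + P * Fᴴ) - (t * t) • (P * K * P) := by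
    rw [hFH, hF, hRdef]
    simp only [riccati, mul_add, add_mul, mul_sub, sub_mul, smul_mul_assoc, mul_smul_comm,
      ← mul_assoc]
    module
  have hR2 : R = P - ε • (F * P + P * Fᴴ) + (ε * ε) • (F * P * Fᴴ) := by
    rw [← hUP, hUdef, conjTranspose_sub, conjTranspose_one, conjTranspose_smul, star_trivial]
    simp only [mul_sub, sub_mul, smul_mul_assoc, mul_smul_comm, one_mul, mul_one]
    module
  have h3 : (t / ε) • R = (t / ε) • P - t • (F * P + P * Fᴴ) + (t * ε) • (F * P * Fᴴ) := by
    conv_lhs => rw [hR2]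
    simp only [smul_add, smul_sub, smul_smul]
    field_simp
  rw [hexp, sub_smul, h3, smul_sub, smul_smul, show t / ε * (t * ε) = t * t by field_simp]
  module

theorem exists_eigenvector_mem {ι : Type*} [Fintype ι] [DecidableEq ι] (M : Matrix ι ι ℂ)
    (W : Submodule ℂ (ι → ℂ)) (hW : ∀ w ∈ W, M *ᵥ w ∈ W) {w : ι → ℂ} (hw : w ∈ W) (hw0 : w ≠ 0) :
    ∃ (e : ℂ) (v : ι → ℂ), v ∈ W ∧ v ≠ 0 ∧ M *ᵥ v = e • v := by
  have : Nontrivial W := ⟨⟨w, hw⟩, 0, by simpa [Subtype.ext_iff] using hw0⟩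
  obtain ⟨e, he⟩ := Module.End.exists_eigenvalue (M.toLin'.restrict (p := W) (q := W) hW)
  obtain ⟨v, hv⟩ := he.exists_hasEigenvector
  exact ⟨e, v, v.2, by simpa using hv.2, congrArg Subtype.val hv.apply_eq_smul⟩

theorem dotProduct_mulVec_lyapunov {ι : Type*} [Fintype ι] {A Y : Matrix ι ι ℂ}
    (hY : Y.IsHermitian) {v : ι → ℂ} (hv : Y *ᵥ v = 0) :
    star v ⬝ᵥ ((A * Y + Y * Aᴴ) *ᵥ v) = 0 := by
  have hv' : star v ᵥ* Y = 0 := by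
    rw [← hY.eq, ← star_mulVec, hv, star_zero]
  rw [add_mulVec, ← mulVec_mulVec, ← mulVec_mulVec, hv, dotProduct_add, mulVec_zero,
    dotProduct_zero, dotProduct_mulVec, hv', zero_dotProduct, add_zero]

/-- If the kernel of a Hermitian matrix `Y` is invariant under `Aᴴ`, then its range is invariant
under `A`. -/
theorem mulVec_mem_range_of_ker {ι : Type*} [Fintype ι] [DecidableEq ι] {A Y : Matrix ι ι ℂ}
    (hY : Y.IsHermitian) (h : ∀ v, Y *ᵥ v = 0 → Y *ᵥ (Aᴴ *ᵥ v) = 0)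
    {w : ι → ℂ} (hw : w ∈ LinearMap.range Y.mulVecLin) :
    A *ᵥ w ∈ LinearMap.range Y.mulVecLin := by
  by_contra hn
  obtain ⟨f, hf, hle⟩ := Submodule.exists_le_ker_of_notMem hn
  obtain ⟨u, rfl⟩ := (dotProductEquiv ℂ ι).surjective f
  obtain ⟨w, rfl⟩ := hw
  have hu : u ᵥ* Y = 0 := by
    refine dotProduct_eq_zero _ fun x ↦ ?_
    have := hle ⟨x, rfl⟩
    simpa [dotProduct_mulVec] using this
  have h1 : Y *ᵥ star u = 0 := by
    rw [← star_star (Y *ᵥ star u), star_mulVec, hY.eq, star_star, hu, star_zero]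
  have h2 := h _ h1
  apply hf
  have h3 : u ᵥ* A ᵥ* Y = 0 := by
    have := congrArg star h2
    rwa [star_mulVec, star_mulVec, hY.eq, conjTranspose_conjTranspose, star_star,
      star_zero] at this
  rw [vecMul_vecMul] at h3
  simp [dotProduct_mulVec, h3]

theorem Matrix.isClosed_posSemidef {ι : Type*} [Fintype ι] :
    IsClosed {X : Matrix ι ι ℂ | X.PosSemidef} := by
  simp only [posSemidef_iff_dotProduct_mulVec, Set.ofPred_and, Set.ofPred_forall]
  refine IsClosed.inter (isClosed_eq (by fun_prop) (by fun_prop)) (isClosed_iInter fun x ↦ ?_)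
  exact isClosed_le continuous_const (by fun_prop)

/-- If `Y ≠ 0` satisfies `K Y = 0` and has a positive semidefinite Lyapunov expression, then its
range contains an unobservable eigenvector of `A`. -/
theorem eq_zero_of_lyapunov_posSemidef {ι : Type*} [Fintype ι] [DecidableEq ι]
    {A K Y : Matrix ι ι ℂ} (hobs : ∀ (e : ℂ) v, A *ᵥ v = e • v → K *ᵥ v = 0 → v = 0)
    (hY : Y.IsHermitian) (hKY : K * Y = 0) (hL : (A * Y + Y * Aᴴ).PosSemidef) : Y = 0 := by
  by_contra hne
  obtain ⟨w, hw⟩ : ∃ w, Y *ᵥ w ≠ 0 := by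
    by_contra! h
    exact hne (ext_of_mulVec_single fun i ↦ by rw [h, zero_mulVec])
  have hinv : ∀ v, Y *ᵥ v = 0 → Y *ᵥ (Aᴴ *ᵥ v) = 0 := fun v hv ↦ by
    have h := (hL.dotProduct_mulVec_zero_iff v).mp (dotProduct_mulVec_lyapunov hY hv)
    simpa [add_mulVec, ← mulVec_mulVec, hv] using h
  obtain ⟨e, v, ⟨u, rfl⟩, hv0, hev⟩ := exists_eigenvector_mem A (LinearMap.range Y.mulVecLin)
    (fun _ h ↦ mulVec_mem_range_of_ker hY hinv h) ⟨w, rfl⟩ hw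
  refine hv0 (hobs e _ hev ?_)
  simp [hKY]

open scoped Matrix.Norms.L2Operator in
/-- Observability bounds the set of positive semidefinite Riccati subsolutions. -/
theorem isCompact_riccati_subsolutions {ι : Type*} [Fintype ι] [DecidableEq ι]
    {A Q K : Matrix ι ι ℂ} (hK : K.PosSemidef)
    (hobs : ∀ (e : ℂ) v, A *ᵥ v = e • v → K *ᵥ v = 0 → v = 0) :
    IsCompact {X : Matrix ι ι ℂ | X.PosSemidef ∧ (riccati A Q K X).PosSemidef} := by
  have : ProperSpace (Matrix ι ι ℂ) := FiniteDimensional.proper ℂ _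
  refine Metric.isCompact_of_isClosed_isBounded ?_ ?_
  · refine isClosed_posSemidef.inter (isClosed_posSemidef.preimage ?_)
    unfold riccati
    fun_prop
  let T : Set (ℝ × Matrix ι ι ℂ) := {p | p.2.PosSemidef ∧
    (p.1 • (A * p.2 + p.2 * Aᴴ) + p.1 ^ 2 • Q - p.2 * K * p.2).PosSemidef ∧
    (A * p.2 + p.2 * Aᴴ + p.1 • Q).PosSemidef}
  have hT : IsClosed T := by
    refine (isClosed_posSemidef.preimage ?_).inter ((isClosed_posSemidef.preimage ?_).inter
      (isClosed_posSemidef.preimage ?_)) <;> fun_prop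
  have hTc : IsCompact ((Set.Icc (0 : ℝ) 1 ×ˢ Metric.sphere (0 : Matrix ι ι ℂ) 1) ∩ T) :=
    (isCompact_Icc.prod (isCompact_sphere _ _)).inter_right hT
  have hT0 : ∀ Y, (0, Y) ∈ T → Y = 0 := by
    rintro Y ⟨hY : Y.PosSemidef, h1, h2⟩
    simp only [zero_smul, add_zero, ne_eq, OfNat.ofNat_ne_zero, not_false_eq_true,
      zero_pow, zero_sub] at h1 h2
    have h3 : Y * K * Y = 0 := by
      open scoped MatrixOrder in
      refine le_antisymm ?_ ?_
      · rwa [Matrix.le_iff, zero_sub]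
      · have := hK.conjTranspose_mul_mul_same Y
        rwa [hY.isHermitian.eq, ← nonneg_iff_posSemidef] at this
    have hKY : K * Y = 0 := by
      refine ext_of_mulVec_single fun i ↦ ?_
      rw [← mulVec_mulVec, zero_mulVec, ← hK.dotProduct_mulVec_zero_iff, star_mulVec,
        hY.isHermitian.eq, dotProduct_mulVec, dotProduct_mulVec, vecMul_vecMul, vecMul_vecMul,
        ← mul_assoc, h3, vecMul_zero, zero_dotProduct]
    exact eq_zero_of_lyapunov_posSemidef hobs hY.isHermitian hKY h2
  obtain ⟨r, hr, hrT⟩ : ∃ r : ℝ, 0 < r ∧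
      ∀ p ∈ (Set.Icc (0 : ℝ) 1 ×ˢ Metric.sphere (0 : Matrix ι ι ℂ) 1) ∩ T, r ≤ p.1 := by
    rcases Set.eq_empty_or_nonempty
      ((Set.Icc (0 : ℝ) 1 ×ˢ Metric.sphere (0 : Matrix ι ι ℂ) 1) ∩ T) with h | h
    · exact ⟨1, one_pos, by simp [h]⟩
    obtain ⟨p, hp, hmin⟩ := hTc.exists_isMinOn h continuous_fst.continuousOn
    refine ⟨p.1, lt_of_le_of_ne hp.1.1.1 fun h0 ↦ ?_, fun q hq ↦ hmin hq⟩
    have hp2 := hT0 p.2 (by rw [h0]; exact hp.2)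
    have := hp.1.2
    simp [hp2] at this
  refine (Metric.isBounded_closedBall (x := 0) (r := max 1 r⁻¹)).subset ?_
  rintro X ⟨hX, hR⟩
  rw [mem_closedBall_zero_iff, le_max_iff]
  by_contra! hbig
  have hX0 : 0 < ‖X‖ := one_pos.trans hbig.1
  refine (lt_self_iff_false r).mp
    ((hrT (‖X‖⁻¹, ‖X‖⁻¹ • X) ⟨⟨⟨by positivity, ?_⟩, ?_⟩, ?_⟩).trans_lt ?_)
  · exact inv_le_one_of_one_le₀ hbig.1.le
  · simp [norm_smul, hX0.ne']
  · refine ⟨hX.smul (by positivity), ?_, ?_⟩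
    · convert hR.smul (by positivity : 0 ≤ ‖X‖⁻¹ ^ 2) using 1
      simp only [riccati, smul_mul_assoc, mul_smul_comm]
      module
    · have hXKX := hK.conjTranspose_mul_mul_same X
      rw [hX.isHermitian.eq] at hXKX
      convert (hR.add hXKX).smul (by positivity : 0 ≤ ‖X‖⁻¹) using 1
      simp only [riccati, smul_mul_assoc, mul_smul_comm]
      module
  · exact inv_lt_of_inv_lt₀ hr hbig.2

/-- A controllable and observable Riccati equation has a positive definite solution. -/
theorem exists_posDef_riccati_eq_zero {ι : Type*} [Fintype ι] [DecidableEq ι]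
    {A Q K : Matrix ι ι ℂ} (hQ : Q.PosSemidef) (hK : K.PosSemidef)
    (hobs : ∀ (e : ℂ) v, A *ᵥ v = e • v → K *ᵥ v = 0 → v = 0)
    (hctrl : ∀ (e : ℂ) v, Aᴴ *ᵥ v = e • v → Q *ᵥ v = 0 → v = 0) :
    ∃ X : Matrix ι ι ℂ, X.PosDef ∧ riccati A Q K X = 0 := by
  obtain ⟨X, ⟨hX, hR⟩, hmax⟩ := (isCompact_riccati_subsolutions (Q := Q) hK hobs).exists_isMaxOn
    ⟨0, PosSemidef.zero, by simpa [riccati] using hQ⟩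
    (f := fun X ↦ X.trace.re) (by fun_prop)
  have hR0 : riccati A Q K X = 0 := by
    by_contra hne
    obtain ⟨D, hD, hD0, hRD⟩ := exists_riccati_add_posSemidef hK hX.isHermitian hR hne
    have h1 := hmax (show X + D ∈ _ from ⟨hX.add hD, hRD⟩)
    have h2 : 0 < D.trace :=
      lt_of_le_of_ne hD.trace_nonneg (Ne.symm (mt hD.trace_eq_zero_iff.mp hD0))
    have h3 := (Complex.lt_def.mp h2).1
    simp [trace_add] at h1 h3
    linarith
  refine ⟨X, ?_, hR0⟩
  rw [hX.posDef_iff_isUnit, isUnit_iff_isUnit_det, isUnit_iff_ne_zero, ne_eq,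
    ← exists_mulVec_eq_zero_iff]
  rintro ⟨w, hw0, hw⟩
  have hQX : ∀ v, X *ᵥ v = 0 → Q *ᵥ v = 0 ∧ X *ᵥ (Aᴴ *ᵥ v) = 0 := fun v hv ↦ by
    have h1 := congrArg (fun M ↦ star v ⬝ᵥ (M *ᵥ v)) hR0
    have h2 : (X * K * X) *ᵥ v = 0 := by rw [← mulVec_mulVec, hv, mulVec_zero]
    simp only [riccati, sub_mulVec, h2, sub_zero, zero_mulVec, dotProduct_zero] at h1
    rw [add_mulVec, dotProduct_add, dotProduct_mulVec_lyapunov hX.isHermitian hv, zero_add,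
      hQ.dotProduct_mulVec_zero_iff] at h1
    have h3 := congrArg (· *ᵥ v) hR0
    simp only [riccati, sub_mulVec, h2, add_mulVec, h1, ← mulVec_mulVec, hv] at h3
    exact ⟨h1, by simpa using h3⟩
  obtain ⟨e, v, hv, hv0, hev⟩ := exists_eigenvector_mem Aᴴ (LinearMap.ker X.mulVecLin)
    (fun v hv ↦ (hQX v hv).2) (show w ∈ _ from hw) hw0
  exact hv0 (hctrl e v hev (hQX v hv).1)

end Riccati

theorem Matrix.fromBlocks_sub_fromBlocks {l m n o R : Type*} [Sub R] (A A' : Matrix n l R)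
    (B B' : Matrix n m R) (C C' : Matrix o l R) (D D' : Matrix o m R) :
    fromBlocks A B C D - fromBlocks A' B' C' D' =
      fromBlocks (A - A') (B - B') (C - C') (D - D') := by
  ext (i | i) (j | j) <;> rfl

theorem smul_one_sub_fromBlocks {ι κ : Type*} [DecidableEq ι] [DecidableEq κ] (lam : ℂ)
    (α : Matrix ι ι ℂ) (x : Matrix ι κ ℂ) (y : Matrix κ ι ℂ) (E : Matrix κ κ ℂ) :
    lam • (1 : Matrix (ι ⊕ κ) (ι ⊕ κ) ℂ) - fromBlocks α x y E =
      fromBlocks (lam • 1 - α) (-x) (-y) (lam • 1 - E) := by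
  rw [← fromBlocks_one, fromBlocks_smul, fromBlocks_sub_fromBlocks]
  simp

section Realization

variable {ι κ ν : Type*} [Fintype ι] [DecidableEq ι] [Fintype κ] [DecidableEq κ]

theorem isUnit_and_transfer_eq_of_similar {γ S : Matrix ι ι ℂ} (hS : IsUnit S)
    (ϑ₁ ϑ₂ : Matrix ι ν ℂ) {lam : ℂ} (h : IsUnit (lam • (1 : Matrix ι ι ℂ) - S⁻¹ * γ * S)) :
    IsUnit (lam • (1 : Matrix ι ι ℂ) - γ) ∧
      transfer γ ϑ₁ ϑ₂ lam = transfer (S⁻¹ * γ * S) (Sᴴ * ϑ₁) (S⁻¹ * ϑ₂) lam := by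
  have hd := (isUnit_iff_isUnit_det S).mp hS
  have heq : lam • (1 : Matrix ι ι ℂ) - S⁻¹ * γ * S = S⁻¹ * (lam • 1 - γ) * S := by
    simp [mul_sub, sub_mul, nonsing_inv_mul _ hd]
  rw [heq] at h
  refine ⟨(by simpa using h : (_ ∧ _) ∧ _).1.2, ?_⟩
  rw [transfer, transfer, heq, Matrix.mul_inv_rev, Matrix.mul_inv_rev, nonsing_inv_nonsing_inv _ hd,
    conjTranspose_mul, conjTranspose_conjTranspose]
  simp only [Matrix.mul_assoc, mul_nonsing_inv_cancel_left _ _ hd]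

theorem transfer_submatrix (e : κ ≃ ι) (γ : Matrix ι ι ℂ) (ϑ₁ ϑ₂ : Matrix ι ν ℂ) (lam : ℂ) :
    transfer (γ.submatrix e e) (ϑ₁.submatrix e id) (ϑ₂.submatrix e id) lam =
      transfer γ ϑ₁ ϑ₂ lam := by
  have h : lam • (1 : Matrix κ κ ℂ) - γ.submatrix e e =
      (lam • (1 : Matrix ι ι ℂ) - γ).submatrix e e := by
    simp [submatrix_sub, submatrix_smul]
  rw [transfer, h, inv_submatrix_equiv, conjTranspose_submatrix, submatrix_mul_equiv,
    submatrix_mul_equiv, submatrix_id_id, transfer]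

theorem isUnit_smul_one_sub_submatrix (e : κ ≃ ι) (γ : Matrix ι ι ℂ) (lam : ℂ) :
    IsUnit (lam • (1 : Matrix κ κ ℂ) - γ.submatrix e e) ↔
      IsUnit (lam • (1 : Matrix ι ι ℂ) - γ) := by
  have h : lam • (1 : Matrix κ κ ℂ) - γ.submatrix e e =
      (lam • (1 : Matrix ι ι ℂ) - γ).submatrix e e := by
    simp [submatrix_sub, submatrix_smul]
  rw [h, isUnit_submatrix_equiv]

theorem transfer_conjTranspose (γ : Matrix ι ι ℂ) (ϑ₁ ϑ₂ : Matrix ι ν ℂ) (lam : ℂ) :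
    transfer γᴴ ϑ₂ ϑ₁ (star lam) = (transfer γ ϑ₁ ϑ₂ lam)ᴴ := by
  simp [transfer, conjTranspose_nonsing_inv, Matrix.mul_assoc]

theorem isUnit_smul_one_sub_conjTranspose (γ : Matrix ι ι ℂ) (lam : ℂ) :
    IsUnit (star lam • (1 : Matrix ι ι ℂ) - γᴴ) ↔ IsUnit (lam • (1 : Matrix ι ι ℂ) - γ) := by
  rw [← isUnit_conjTranspose]
  simp

theorem transfer_fromBlocks_zero₁₂ {α : Matrix ι ι ℂ} {E : Matrix κ κ ℂ} {lam : ℂ}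
    (hα : IsUnit (lam • (1 : Matrix ι ι ℂ) - α)) (hE : IsUnit (lam • (1 : Matrix κ κ ℂ) - E))
    (y : Matrix κ ι ℂ) (a c : Matrix ι ν ℂ) (z : Matrix κ ν ℂ) :
    transfer (fromBlocks α 0 y E) (fromRows a 0) (fromRows c z) lam = transfer α a c lam := by
  rw [transfer, smul_one_sub_fromBlocks, neg_zero,
    inv_fromBlocks_zero₁₂_of_isUnit_iff _ _ _ (iff_of_true hα hE),
    conjTranspose_fromRows_eq_fromCols_conjTranspose, Matrix.mul_assoc, fromBlocks_mul_fromRows,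
    fromCols_mul_fromRows]
  simp [transfer, Matrix.mul_assoc]

theorem transfer_fromBlocks_zero₂₁ {α : Matrix ι ι ℂ} {E : Matrix κ κ ℂ} {lam : ℂ}
    (hα : IsUnit (lam • (1 : Matrix ι ι ℂ) - α)) (hE : IsUnit (lam • (1 : Matrix κ κ ℂ) - E))
    (x : Matrix ι κ ℂ) (a c : Matrix ι ν ℂ) (b : Matrix κ ν ℂ) :
    transfer (fromBlocks α x 0 E) (fromRows a b) (fromRows c 0) lam = transfer α a c lam := by
  rw [transfer, smul_one_sub_fromBlocks, neg_zero,
    inv_fromBlocks_zero₂₁_of_isUnit_iff _ _ _ (iff_of_true hα hE),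
    conjTranspose_fromRows_eq_fromCols_conjTranspose, Matrix.mul_assoc, fromBlocks_mul_fromRows,
    fromCols_mul_fromRows]
  simp [transfer, Matrix.mul_assoc]

variable [Fintype ν]

theorem HasSymmetricRealization.of_similar {γ S : Matrix ι ι ℂ} (hS : IsUnit S)
    {ϑ₁ ϑ₂ : Matrix ι ν ℂ}
    (h : HasSymmetricRealization (S⁻¹ * γ * S) (Sᴴ * ϑ₁) (S⁻¹ * ϑ₂)) :
    HasSymmetricRealization γ ϑ₁ ϑ₂ := by
  obtain ⟨β, θ₁, θ₂, hr, hs⟩ := h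
  refine ⟨β, θ₁, θ₂, fun lam hu ↦ ?_, hs⟩
  obtain ⟨h1, h2⟩ := hr lam hu
  obtain ⟨h3, h4⟩ := isUnit_and_transfer_eq_of_similar hS ϑ₁ ϑ₂ h1
  exact ⟨h3, h4.trans h2⟩

theorem HasSymmetricRealization.of_submatrix (e : κ ≃ ι) {γ : Matrix ι ι ℂ} {ϑ₁ ϑ₂ : Matrix ι ν ℂ}
    (h : HasSymmetricRealization (γ.submatrix e e) (ϑ₁.submatrix e id) (ϑ₂.submatrix e id)) :
    HasSymmetricRealization γ ϑ₁ ϑ₂ := by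
  obtain ⟨β, θ₁, θ₂, hr, hs⟩ := h
  refine ⟨β.submatrix e.symm e.symm, θ₁.submatrix e.symm id, θ₂.submatrix e.symm id,
    fun lam hu ↦ ?_, ?_⟩
  · rw [isUnit_smul_one_sub_submatrix] at hu
    rw [transfer_submatrix]
    have := hr lam hu
    rwa [isUnit_smul_one_sub_submatrix, transfer_submatrix] at this
  · have := congrArg (fun M ↦ M.submatrix e.symm e.symm) hs
    simpa [submatrix_sub, submatrix_smul, ← submatrix_mul_equiv _ _ _ (Equiv.refl ν)] using this

theorem HasSymmetricRealization.of_conjTranspose {γ : Matrix ι ι ℂ} {ϑ₁ ϑ₂ : Matrix ι ν ℂ}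
    (h : HasSymmetricRealization γᴴ ϑ₂ ϑ₁) : HasSymmetricRealization γ ϑ₁ ϑ₂ := by
  obtain ⟨β, θ₁, θ₂, hr, hs⟩ := h
  refine ⟨βᴴ, θ₂, θ₁, fun lam hu ↦ ?_, ?_⟩
  · rw [← isUnit_smul_one_sub_conjTranspose, conjTranspose_conjTranspose] at hu
    obtain ⟨h1, h2⟩ := hr _ hu
    rw [isUnit_smul_one_sub_conjTranspose] at h1
    rw [transfer_conjTranspose] at h2
    refine ⟨h1, conjTranspose_injective ?_⟩
    rw [h2, ← transfer_conjTranspose, conjTranspose_conjTranspose]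
  · rw [conjTranspose_conjTranspose, ← neg_sub, hs, ← smul_neg, neg_sub]

theorem exists_row_mul_conjTranspose [DecidableEq ν] [Nonempty ν] {r : ℝ} (hr : 0 ≤ r) :
    ∃ d : Matrix Unit ν ℂ, d * dᴴ = (r : ℂ) • 1 := by
  obtain ⟨j⟩ := ‹Nonempty ν›
  refine ⟨single () j (√r : ℂ), ?_⟩
  ext
  simp [conjTranspose_single, ← Complex.ofReal_mul, Real.mul_self_sqrt hr]

/-- A one-dimensional unobservable part can be split off. -/
theorem HasSymmetricRealization.fromBlocks [DecidableEq ν] [Nonempty ν] {α : Matrix ι ι ℂ}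
    {a c : Matrix ι ν ℂ} (h : HasSymmetricRealization α a c) (y : Matrix Unit ι ℂ)
    (E : Matrix Unit Unit ℂ) (z : Matrix Unit ν ℂ) :
    HasSymmetricRealization (fromBlocks α 0 y E) (fromRows a 0) (fromRows c z) := by
  obtain ⟨β, θ₁, θ₂, hr, hs⟩ := h
  have hE : E - Eᴴ = Complex.I • ((2 * (E () ()).im : ℝ) : ℂ) • (1 : Matrix Unit Unit ℂ) := by
    ext
    simp [Complex.ext_iff, two_mul]
  rcases le_total 0 (E () ()).im with him | him
  · obtain ⟨d, hd⟩ := exists_row_mul_conjTranspose (ν := ν) (by positivity : 0 ≤ 2 * (E () ()).im)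
    refine ⟨Matrix.fromBlocks β (Complex.I • (θ₁ * dᴴ)) 0 E, fromRows θ₁ d, fromRows θ₂ 0,
      fun lam hu ↦ ?_, ?_⟩
    · rw [smul_one_sub_fromBlocks, neg_zero, isUnit_fromBlocks_zero₂₁] at hu
      obtain ⟨h1, h2⟩ := hr lam hu.1
      rw [transfer_fromBlocks_zero₁₂ h1 hu.2, transfer_fromBlocks_zero₂₁ hu.1 hu.2,
        smul_one_sub_fromBlocks, neg_zero, isUnit_fromBlocks_zero₁₂]
      exact ⟨⟨h1, hu.2⟩, h2⟩
    · simp only [fromBlocks_conjTranspose, fromBlocks_sub_fromBlocks, fromBlocks_smul,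
        conjTranspose_fromRows_eq_fromCols_conjTranspose, fromRows_mul_fromCols, hs, hE, hd]
      simp
  · obtain ⟨d, hd⟩ := exists_row_mul_conjTranspose (ν := ν)
      (by linarith : 0 ≤ -(2 * (E () ()).im))
    refine ⟨Matrix.fromBlocks β 0 (-(Complex.I • (d * θ₂ᴴ))) E, fromRows θ₁ 0, fromRows θ₂ d,
      fun lam hu ↦ ?_, ?_⟩
    · rw [smul_one_sub_fromBlocks, neg_zero, isUnit_fromBlocks_zero₁₂] at hu
      obtain ⟨h1, h2⟩ := hr lam hu.1
      rw [transfer_fromBlocks_zero₁₂ h1 hu.2, transfer_fromBlocks_zero₁₂ hu.1 hu.2,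
        smul_one_sub_fromBlocks, neg_zero, isUnit_fromBlocks_zero₁₂]
      exact ⟨⟨h1, hu.2⟩, h2⟩
    · simp only [fromBlocks_conjTranspose, fromBlocks_sub_fromBlocks, fromBlocks_smul,
        conjTranspose_fromRows_eq_fromCols_conjTranspose, fromRows_mul_fromCols, hs, hE, hd]
      simp

theorem exists_isUnit_mulVec_eq {v w : ι → ℂ} (hv : v ≠ 0) (hw : w ≠ 0) :
    ∃ S : Matrix ι ι ℂ, IsUnit S ∧ S *ᵥ v = w := by
  obtain ⟨g, hg⟩ := SeparatingDual.exists_continuousLinearEquiv_apply_eq (R := ℂ) hv hw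
  refine ⟨LinearMap.toMatrix' g.toLinearEquiv.toLinearMap, ?_, ?_⟩
  · rw [isUnit_iff_isUnit_det, LinearMap.det_toMatrix']
    exact g.toLinearEquiv.isUnit_det'
  · rw [LinearMap.toMatrix'_mulVec]
    exact hg

/-- An unobservable realization reduces to realizations of smaller dimension. -/
theorem hasSymmetricRealization_of_unobservable [DecidableEq ν] [Nonempty ν]
    (ih : ∀ (γ : Matrix ι ι ℂ) (ϑ₁ ϑ₂ : Matrix ι ν ℂ), HasSymmetricRealization γ ϑ₁ ϑ₂)
    {γ : Matrix (ι ⊕ Unit) (ι ⊕ Unit) ℂ} {ϑ₁ ϑ₂ : Matrix (ι ⊕ Unit) ν ℂ} {e : ℂ}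
    {v : ι ⊕ Unit → ℂ} (hv : v ≠ 0) (hev : γ *ᵥ v = e • v) (hϑ : ϑ₁ᴴ *ᵥ v = 0) :
    HasSymmetricRealization γ ϑ₁ ϑ₂ := by
  obtain ⟨S, hS, hSv⟩ := exists_isUnit_mulVec_eq (ι := ι ⊕ Unit) (v := Pi.single (.inr ()) 1)
    (by simp) hv
  have hd := (isUnit_iff_isUnit_det S).mp hS
  refine .of_similar hS ?_
  set γ' := S⁻¹ * γ * S with hγ'
  set ϑ₁' := Sᴴ * ϑ₁ with hϑ₁'
  have h1 : γ' *ᵥ Pi.single (.inr ()) 1 = e • Pi.single (.inr ()) 1 := by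
    rw [hγ', ← mulVec_mulVec, hSv, ← mulVec_mulVec, hev, mulVec_smul, ← hSv, mulVec_mulVec,
      nonsing_inv_mul _ hd, one_mulVec]
  have h2 : ϑ₁'ᴴ *ᵥ Pi.single (.inr ()) 1 = 0 := by
    rw [hϑ₁', conjTranspose_mul, conjTranspose_conjTranspose, ← mulVec_mulVec, hSv, hϑ]
  have h3 : γ'.toBlocks₁₂ = 0 := by
    ext i j
    simpa [toBlocks₁₂] using congrFun h1 (.inl i)
  have h4 : ϑ₁'.toRows₂ = 0 := by
    ext i j
    simpa [toRows₂] using congrFun h2 j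
  rw [← fromBlocks_toBlocks γ', h3, ← fromRows_toRows ϑ₁', h4, ← fromRows_toRows (S⁻¹ * ϑ₂)]
  exact (ih _ _ _).fromBlocks _ _ _

open scoped ComplexOrder in
/-- A controllable and observable realization can be normalized by a positive definite solution of
the Riccati equation. -/
theorem hasSymmetricRealization_of_observable_of_controllable {γ : Matrix ι ι ℂ}
    {ϑ₁ ϑ₂ : Matrix ι ν ℂ}
    (hobs : ∀ (e : ℂ) v, γ *ᵥ v = e • v → ϑ₁ᴴ *ᵥ v = 0 → v = 0)
    (hctrl : ∀ (e : ℂ) v, γᴴ *ᵥ v = e • v → ϑ₂ᴴ *ᵥ v = 0 → v = 0) :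
    HasSymmetricRealization γ ϑ₁ ϑ₂ := by
  have hker : ∀ (ϑ : Matrix ι ν ℂ) v, (ϑ * ϑᴴ) *ᵥ v = 0 → ϑᴴ *ᵥ v = 0 := fun ϑ v h ↦ by
    simpa using (conjTranspose_mul_self_mulVec_eq_zero ϑᴴ v).mp (by simpa using h)
  obtain ⟨X, hX, hR⟩ := exists_posDef_riccati_eq_zero (A := -Complex.I • γ)
    (posSemidef_self_mul_conjTranspose ϑ₂) (posSemidef_self_mul_conjTranspose ϑ₁)
    (fun e v he hv ↦ hobs (Complex.I * e) v (by
      rw [mul_smul, ← he, smul_mulVec, smul_smul]; simp) (hker _ _ hv))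
    (fun e v he hv ↦ hctrl (-Complex.I * e) v (by
      rw [mul_smul, ← he, conjTranspose_smul, smul_mulVec, smul_smul]; simp) (hker _ _ hv))
  obtain ⟨S, rfl⟩ : ∃ S : Matrix ι ι ℂ, X = S * Sᴴ := by
    open scoped MatrixOrder in
    exact CStarAlgebra.nonneg_iff_eq_mul_star_self.mp (nonneg_iff_posSemidef.mpr hX.posSemidef)
  have hS : IsUnit S := (by simpa using hX.isUnit : IsUnit S)
  have hd := (isUnit_iff_isUnit_det S).mp hS
  have hd' : IsUnit Sᴴ.det := by rw [det_conjTranspose]; exact hd.star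
  refine ⟨S⁻¹ * γ * S, Sᴴ * ϑ₁, S⁻¹ * ϑ₂,
    fun lam ↦ isUnit_and_transfer_eq_of_similar hS ϑ₁ ϑ₂, ?_⟩
  have h := congrArg (fun M ↦ Complex.I • (S⁻¹ * M * Sᴴ⁻¹)) hR
  simp only [riccati, mul_add, mul_sub, add_mul, sub_mul, smul_mul_assoc, mul_smul_comm,
    conjTranspose_smul, Matrix.mul_assoc, nonsing_inv_mul_cancel_left _ _ hd,
    mul_nonsing_inv _ hd', mul_one, smul_add, smul_sub, smul_smul, mul_zero, zero_mul,
    smul_zero] at h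
  simp only [conjTranspose_mul, conjTranspose_conjTranspose, conjTranspose_nonsing_inv,
    Matrix.mul_assoc, smul_sub]
  simp at h
  rw [← sub_eq_zero, ← h]
  abel

/-- Every realization with nonempty input space admits a symmetric one of the same dimension. -/
theorem hasSymmetricRealization [DecidableEq ν] [Nonempty ν] (n : ℕ) :
    ∀ (γ : Matrix (Fin n) (Fin n) ℂ) (ϑ₁ ϑ₂ : Matrix (Fin n) ν ℂ),
      HasSymmetricRealization γ ϑ₁ ϑ₂ := by
  induction n with
  | zero =>
    exact fun γ ϑ₁ ϑ₂ ↦ hasSymmetricRealization_of_observable_of_controllable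
      (fun _ _ _ _ ↦ Subsingleton.elim _ _) (fun _ _ _ _ ↦ Subsingleton.elim _ _)
  | succ n ih =>
    have hunobs : ∀ (γ : Matrix (Fin (n + 1)) (Fin (n + 1)) ℂ) (ϑ₁ ϑ₂ : Matrix (Fin (n + 1)) ν ℂ)
        (e : ℂ) (v : Fin (n + 1) → ℂ), γ *ᵥ v = e • v → ϑ₁ᴴ *ᵥ v = 0 → v ≠ 0 →
        HasSymmetricRealization γ ϑ₁ ϑ₂ := fun γ ϑ₁ ϑ₂ e v hev hϑ hv ↦ by
      have f : Fin n ⊕ Unit ≃ Fin (n + 1) := Fintype.equivOfCardEq (by simp)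
      refine .of_submatrix f (hasSymmetricRealization_of_unobservable ih (e := e) (v := v ∘ f)
        ?_ ?_ ?_)
      · exact fun h ↦ hv (by simpa [Function.comp_assoc] using congrArg (· ∘ f.symm) h)
      · rw [submatrix_mulVec_equiv, Function.comp_assoc, f.self_comp_symm, Function.comp_id, hev]
        rfl
      · rw [conjTranspose_submatrix, submatrix_mulVec_equiv, Function.comp_assoc,
          f.self_comp_symm, Function.comp_id]
        exact hϑ
    intro γ ϑ₁ ϑ₂
    by_cases hobs : ∀ (e : ℂ) v, γ *ᵥ v = e • v → ϑ₁ᴴ *ᵥ v = 0 → v = 0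
    · by_cases hctrl : ∀ (e : ℂ) v, γᴴ *ᵥ v = e • v → ϑ₂ᴴ *ᵥ v = 0 → v = 0
      · exact hasSymmetricRealization_of_observable_of_controllable hobs hctrl
      · push Not at hctrl
        obtain ⟨e, v, h1, h2, h3⟩ := hctrl
        exact .of_conjTranspose (hunobs _ _ _ e v h1 h2 h3)
    · push Not at hobs
      obtain ⟨e, v, h1, h2, h3⟩ := hobs
      exact hunobs _ _ _ e v h1 h2 h3

end Realization

/-- every strictly proper rational matrix function (given here by a minimal
realization `φ(λ) = i ϑ₁ᴴ (λI − γ)⁻¹ ϑ₂` of state-space dimension `n`) admits a minimal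
realization `φ(λ) = i θ₁ᴴ (λI − β)⁻¹ θ₂` (again of dimension `n`, hence minimal) with the
additional symmetry property `β − βᴴ = i(θ₁θ₁ᴴ − θ₂θ₂ᴴ)`. -/
theorem stmt17 {m n : ℕ}
    (φ : ℂ → Matrix (Fin m) (Fin m) ℂ)
    (γ : Matrix (Fin n) (Fin n) ℂ)
    (ϑ₁ ϑ₂ : Matrix (Fin n) (Fin m) ℂ)
    (hreal : ∀ lam : ℂ, IsUnit (lam • (1 : Matrix (Fin n) (Fin n) ℂ) - γ) →
      φ lam = Complex.I • (ϑ₁ᴴ * (lam • (1 : Matrix (Fin n) (Fin n) ℂ) - γ)⁻¹ * ϑ₂))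
    (hmin : ∀ (n' : ℕ) (γ' : Matrix (Fin n') (Fin n') ℂ)
      (ϑ₁' ϑ₂' : Matrix (Fin n') (Fin m) ℂ),
      (∀ lam : ℂ, IsUnit (lam • (1 : Matrix (Fin n') (Fin n') ℂ) - γ') →
        φ lam = Complex.I • (ϑ₁'ᴴ * (lam • (1 : Matrix (Fin n') (Fin n') ℂ) - γ')⁻¹ * ϑ₂')) →
      n ≤ n') :
    ∃ (β : Matrix (Fin n) (Fin n) ℂ) (θ₁ θ₂ : Matrix (Fin n) (Fin m) ℂ),
      (∀ lam : ℂ, IsUnit (lam • (1 : Matrix (Fin n) (Fin n) ℂ) - β) →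
        φ lam = Complex.I • (θ₁ᴴ * (lam • (1 : Matrix (Fin n) (Fin n) ℂ) - β)⁻¹ * θ₂)) ∧
      β - βᴴ = Complex.I • (θ₁ * θ₁ᴴ - θ₂ * θ₂ᴴ) := by
  rcases isEmpty_or_nonempty (Fin m) with hm | hm
  · exact ⟨0, 0, 0, fun lam _ ↦ Subsingleton.elim _ _, by simp⟩
  · obtain ⟨β, θ₁, θ₂, hr, hs⟩ := hasSymmetricRealization n γ ϑ₁ ϑ₂
    refine ⟨β, θ₁, θ₂, fun lam hu ↦ ?_, hs⟩
    obtain ⟨h1, h2⟩ := hr lam hu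
    rw [hreal lam h1]
    exact congrArg (Complex.I • ·) h2
end
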